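/- Let μ be a Borel probability measure on SL₂(ℝ) with a finite exponential moment whose support generates a Zariski dense subgroup. There exists a constant C > 0 such that for all real numbers s, t and every x ∈ X, Σ_{n≥0} μ^{*n}{ g : σ(g,x) − t ∈ [0, s] } ≤ C · max{1, s}. -/

import Mathlib

open MeasureTheory Filter

noncomputable section

abbrev SL2 := Matrix.SpecialLinearGroup (Fin 2) ℝ

abbrev PX := Projectivization ℝ (Fin 2 → ℝ)

instance : TopologicalSpace SL2 := instTopologicalSpaceSubtype
instance : TopologicalSpace PX := instTopologicalSpaceQuotient
instance : MeasurableSpace SL2 := borel _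
instance : MeasurableSpace PX := borel _

/-- Euclidean norm on ℝ². -/
def enorm2 (v : Fin 2 → ℝ) : ℝ := Real.sqrt (v 0 ^ 2 + v 1 ^ 2)

/-- Operator norm of g ∈ SL₂(ℝ) w.r.t. the Euclidean norm on ℝ². -/
def opNorm (g : SL2) : ℝ :=
  ‖Matrix.toEuclideanCLM (𝕜 := ℝ) (n := Fin 2) (g : Matrix (Fin 2) (Fin 2) ℝ)‖

/-- Cartan projection κ(g) = log ‖g‖. -/
def kappa (g : SL2) : ℝ := Real.log (opNorm g)

/-- The projective action of SL₂(ℝ) on ℙ(ℝ²). -/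
def act (g : SL2) (x : PX) : PX :=
  Projectivization.map ((Matrix.SpecialLinearGroup.toLin' g).toLinearMap)
    (LinearEquiv.injective _) x

/-- The norm cocycle σ(g, ℝv) = log (‖gv‖/‖v‖). -/
def cocycle (g : SL2) (x : PX) : ℝ :=
  Real.log (enorm2 ((g : Matrix (Fin 2) (Fin 2) ℝ).mulVec x.rep) / enorm2 x.rep)

/-- The sine distance d(ℝv, ℝw) = |det(v,w)|/(‖v‖‖w‖) on ℙ(ℝ²). -/
def projDist (x y : PX) : ℝ :=
  |x.rep 0 * y.rep 1 - x.rep 1 * y.rep 0| / (enorm2 x.rep * enorm2 y.rep)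

/-- An angle θ(x) ∈ ℝ representing x = ℝ(cos θ, sin θ). -/
def pangle (x : PX) : ℝ := Complex.arg (x.rep 0 + x.rep 1 * Complex.I)

/-- The (topological) support of a measure. -/
def measSupp (μ : Measure SL2) : Set SL2 :=
  {g | ∀ U : Set SL2, IsOpen U → g ∈ U → 0 < μ U}

/-- μ has a finite exponential moment. -/
def HasExpMoment (μ : Measure SL2) : Prop :=
  ∃ ε₁ > (0 : ℝ), ∫⁻ g, ENNReal.ofReal (opNorm g ^ ε₁) ∂μ < ⊤

/-- The group generated by the support of μ is Zariski dense in SL₂(ℝ),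
equivalently it is not solvable. -/
def ZariskiDense (μ : Measure SL2) : Prop :=
  ¬ IsSolvable (Subgroup.closure (measSupp μ))

/-- ν is μ-stationary: μ ∗ ν = ν. -/
def IsStationaryMeas (μ : Measure SL2) (ν : Measure PX) : Prop :=
  μ.bind (fun g => ν.map (act g)) = ν

/-- The product g₁ ⋯ gₙ of a word (g₁, …, gₙ). -/
def word {n : ℕ} (g : Fin n → SL2) : SL2 := (List.ofFn g).prod

/-- The product measure μ^{⊗n} on words of length n. -/
def μpi (μ : Measure SL2) (n : ℕ) : Measure (Fin n → SL2) := Measure.pi fun _ => μ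

/-!
Lift the norm cocycle from the projective line to the unit circle, on which it is continuous. The
convolution powers `μ^{*n}` escape to infinity: on `L²(ℝ²)` the closed subgroup fixing a nonzero
function is bounded, because `f² dv` is a finite measure without mass on lines, and a bounded
subgroup of `SL₂(ℝ)` is solvable; so no nonzero function is fixed by `μ`-almost every `g`, and the
mean ergodic theorem for the averaged Koopman operator makes `∫ ‖g‖⁻² dμ^{*n}` arbitrarily small.

If the drift `∫ σ(g, v) dμ^{*N}(g)` were below `1` at some `v` for every `N`, a limit of empirical
measures would be a stationary measure `ν` with `∫∫ σ dμ dν ≤ 0`. Atoms of `ν` would yield a finite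
set stabilized by almost every `g`, and such stabilizers are solvable; so `ν` has no atoms and
`∫ σ(g, v) dν(v) ≥ κ(g) / 2 - C`. Integrating over `μ^{*n}`, the means of `κ` stay bounded, which
contradicts escape to infinity by Jensen's inequality.

Hence `∫ σ(g, v) dμ^{*N}(g) ≥ 1` for some `N` and all `v`. The exponential moment turns this into a
contraction `∫ e^{-εσ(g, v)} dμ^{*N}(g) ≤ a < 1`, so `min(1, e^{-εr})` decreases by a fixed amount
in `N` steps from each visit of `r = σ - t` to `[0, 1]`: the expected number of visits is bounded.
-/

/-! ### Convolution powers and renewal sums -/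

section ConvPow

variable {G : Type*} [Monoid G] [MeasurableSpace G]

/-- The `n`-th convolution power `μ^{*n}`: the law of a product of `n` independent `μ`-distributed
factors. -/
def convPow (μ : Measure G) : ℕ → Measure G
  | 0 => Measure.dirac 1
  | n + 1 => μ ∗ₘ convPow μ n

variable [MeasurableMul₂ G] (μ : Measure G) [IsProbabilityMeasure μ]

instance isProbabilityMeasure_convPow (n : ℕ) : IsProbabilityMeasure (convPow μ n) := by
  induction n with
  | zero => exact Measure.dirac.isProbabilityMeasure
  | succ n ih =>
    rw [convPow]
    infer_instance

theorem convPow_one : convPow μ 1 = μ :=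
  Measure.mconv_dirac_one μ

theorem convPow_add (m n : ℕ) : convPow μ (m + n) = convPow μ m ∗ₘ convPow μ n := by
  induction m with
  | zero => rw [zero_add, convPow, Measure.dirac_one_mconv]
  | succ m ih => rw [add_right_comm, convPow, convPow, ih, Measure.mconv_assoc]

theorem lintegral_convPow_add (m n : ℕ) {f : G → ENNReal} (hf : Measurable f) :
    ∫⁻ g, f g ∂convPow μ (m + n) = ∫⁻ h, ∫⁻ g, f (g * h) ∂convPow μ m ∂convPow μ n := by
  rw [convPow_add, Measure.lintegral_mconv hf, lintegral_lintegral_swap (by fun_prop)]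

theorem integral_convPow_add {E : Type*} [NormedAddCommGroup E] [NormedSpace ℝ E] (m n : ℕ)
    {f : G → E} (hf : Integrable f (convPow μ (m + n))) :
    ∫ g, f g ∂convPow μ (m + n) = ∫ h, ∫ g, f (g * h) ∂convPow μ m ∂convPow μ n := by
  rw [convPow_add] at hf ⊢
  rw [integral_mconv hf, integral_integral_swap]
  exact (integrable_map_measure hf.1 (by fun_prop)).mp hf

theorem lintegral_convPow_lt_top_of_submultiplicative {F : G → ENNReal}
    (hF : Measurable F) (hF_one : F 1 < ⊤) (hF_mul : ∀ g h, F (g * h) ≤ F g * F h)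
    (hμ : ∫⁻ g, F g ∂μ < ⊤) (n : ℕ) : ∫⁻ g, F g ∂convPow μ n < ⊤ := by
  induction n with
  | zero => rwa [convPow, lintegral_dirac' _ hF]
  | succ n ih =>
    calc ∫⁻ g, F g ∂convPow μ (n + 1)
        = ∫⁻ h, ∫⁻ g, F (g * h) ∂convPow μ n ∂μ := by
          rw [lintegral_convPow_add μ n 1 hF, convPow_one]
      _ ≤ ∫⁻ h, ∫⁻ g, F g * F h ∂convPow μ n ∂μ := by
          gcongr with h g
          exact hF_mul g h
      _ = (∫⁻ g, F g ∂convPow μ n) * ∫⁻ h, F h ∂μ := by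
          simp only [lintegral_mul_const _ hF, lintegral_const_mul _ hF]
      _ < ⊤ := ENNReal.mul_lt_top ih hμ

theorem measurePreserving_prod_ofFn (n : ℕ) :
    MeasurePreserving (fun g : Fin n → G => (List.ofFn g).prod) (Measure.pi fun _ => μ)
      (convPow μ n) := by
  induction n with
  | zero => simpa [convPow] using ⟨measurable_const, by simp⟩
  | succ n ih =>
    have hmul : MeasurePreserving (fun p : G × G => p.1 * p.2) (μ.prod (convPow μ n))
        (convPow μ (n + 1)) := ⟨measurable_mul, rfl⟩
    convert hmul.comp (((MeasurePreserving.id μ).prod ih).comp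
      (measurePreserving_piFinSuccAbove (fun _ => μ) 0)) using 1
    ext g
    simp [List.ofFn_succ, Fin.tail_def]

end ConvPow

section Renewal

theorem mul_tsum_le_of_add_mul_le {u p : ℕ → ENNReal} {κ : ENNReal} {N : ℕ} (hu : ∀ n, u n ≤ 1)
    (h : ∀ n, u (n + N) + κ * p n ≤ u n) : κ * ∑' n, p n ≤ N := by
  have partial_sum (k : ℕ) : κ * ∑ n ∈ Finset.range k, p n + ∑ i ∈ Finset.range N, u (k + i) ≤
      ∑ i ∈ Finset.range N, u i := by
    induction k with
    | zero => simp
    | succ k ih =>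
      have window_shift : ∑ i ∈ Finset.range N, u (k + 1 + i) + u k =
          ∑ i ∈ Finset.range N, u (k + i) + u (k + N) := by
        simpa [add_assoc, add_comm 1] using
          (Finset.sum_range_succ' (fun i => u (k + i)) N).symm.trans
            (Finset.sum_range_succ (fun i => u (k + i)) N)
      have hk : u k ≠ ⊤ := ne_top_of_le_ne_top ENNReal.one_ne_top (hu k)
      refine (ENNReal.add_le_add_iff_right hk).1 ?_
      calc κ * ∑ n ∈ Finset.range (k + 1), p n + ∑ i ∈ Finset.range N, u (k + 1 + i) + u k
          = (κ * ∑ n ∈ Finset.range k, p n + ∑ i ∈ Finset.range N, u (k + i))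
              + (u (k + N) + κ * p k) := by
            rw [add_assoc, window_shift, Finset.sum_range_succ]
            ring
        _ ≤ ∑ i ∈ Finset.range N, u i + u k := add_le_add ih (h k)
  rw [← ENNReal.tsum_mul_left, ENNReal.tsum_eq_iSup_nat]
  refine iSup_le fun k => ?_
  calc ∑ n ∈ Finset.range k, κ * p n
      ≤ κ * ∑ n ∈ Finset.range k, p n + ∑ i ∈ Finset.range N, u (k + i) := by
        rw [← Finset.mul_sum]
        exact le_self_add
    _ ≤ ∑ i ∈ Finset.range N, u i := partial_sum k
    _ ≤ ∑ i ∈ Finset.range N, 1 := Finset.sum_le_sum fun i _ => hu i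
    _ = N := by simp

/-- The Lyapunov function `min(1, e^{-εr})` of the renewal argument. -/
def expLyapunov (ε r : ℝ) : ENNReal :=
  min 1 (ENNReal.ofReal (Real.exp (-(ε * r))))

theorem measurable_expLyapunov (ε : ℝ) : Measurable (expLyapunov ε) := by
  unfold expLyapunov
  fun_prop

theorem lintegral_expLyapunov_add_le {Ω : Type*} [MeasurableSpace Ω] {ρ : Measure Ω}
    [IsProbabilityMeasure ρ] {f : Ω → ℝ} {ε : ℝ} {a : ENNReal} (hε : 0 ≤ ε) (ha : a ≤ 1)
    (hf : ∫⁻ ω, ENNReal.ofReal (Real.exp (-(ε * f ω))) ∂ρ ≤ a) (r : ℝ) :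
    ∫⁻ ω, expLyapunov ε (f ω + r) ∂ρ +
        (1 - a) * ENNReal.ofReal (Real.exp (-ε)) * (Set.Icc 0 1).indicator 1 r ≤
      expLyapunov ε r := by
  have le_one : ∫⁻ ω, expLyapunov ε (f ω + r) ∂ρ ≤ 1 :=
    (lintegral_mono fun _ => min_le_left _ _).trans (by simp)
  have le_exp : ∫⁻ ω, expLyapunov ε (f ω + r) ∂ρ ≤ a * ENNReal.ofReal (Real.exp (-(ε * r))) := by
    refine (lintegral_mono fun _ => min_le_right _ _).trans ?_
    simp only [mul_add, neg_add, Real.exp_add, ENNReal.ofReal_mul (Real.exp_pos _).le]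
    rw [lintegral_mul_const' _ _ ENNReal.ofReal_ne_top]
    gcongr
  by_cases hr : r ∈ Set.Icc (0 : ℝ) 1
  · have hexp : ENNReal.ofReal (Real.exp (-ε)) ≤ ENNReal.ofReal (Real.exp (-(ε * r))) := by
      gcongr
      exact mul_le_of_le_one_right hε hr.2
    have hH : expLyapunov ε r = ENNReal.ofReal (Real.exp (-(ε * r))) := by
      rw [expLyapunov, min_eq_right]
      exact ENNReal.ofReal_le_one.2 (Real.exp_le_one_iff.2 (neg_nonpos.2 (mul_nonneg hε hr.1)))
    rw [Set.indicator_of_mem hr, Pi.one_apply, mul_one, hH]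
    calc _ ≤ a * ENNReal.ofReal (Real.exp (-(ε * r))) +
          (1 - a) * ENNReal.ofReal (Real.exp (-(ε * r))) := by gcongr
      _ = ENNReal.ofReal (Real.exp (-(ε * r))) := by
        rw [← add_mul, add_tsub_cancel_of_le ha, one_mul]
  · rw [Set.indicator_of_notMem hr, mul_zero, add_zero]
    exact le_min le_one (le_exp.trans (mul_le_of_le_one_left' ha))

theorem tsum_measure_Icc_le {Ω : Type*} [MeasurableSpace Ω] {ρ : ℕ → Measure Ω} {f : Ω → ℝ}
    {K : ENNReal} (h : ∀ t, ∑' n, ρ n {ω | f ω - t ∈ Set.Icc 0 1} ≤ K) (s t : ℝ) :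
    ∑' n, ρ n {ω | f ω - t ∈ Set.Icc 0 s} ≤ ENNReal.ofReal (2 * max 1 s) * K := by
  obtain hs | hs := lt_or_ge s 0
  · simp [Set.Icc_eq_empty (not_le.2 hs)]
  have cover : {ω | f ω - t ∈ Set.Icc 0 s} ⊆
      ⋃ i ∈ Finset.range (⌊s⌋₊ + 1), {ω | f ω - (t + i) ∈ Set.Icc 0 1} := by
    intro ω hω
    simp only [Set.mem_iUnion, Finset.mem_range, Nat.lt_succ_iff]
    refine ⟨⌊f ω - t⌋₊, Nat.floor_le_floor hω.2, ?_, ?_⟩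
    · linarith [Nat.floor_le hω.1]
    · linarith [Nat.lt_floor_add_one (f ω - t)]
  calc ∑' n, ρ n {ω | f ω - t ∈ Set.Icc 0 s}
      ≤ ∑' n, ∑ i ∈ Finset.range (⌊s⌋₊ + 1), ρ n {ω | f ω - (t + i) ∈ Set.Icc 0 1} :=
        ENNReal.tsum_le_tsum fun n => (measure_mono cover).trans (measure_biUnion_finset_le _ _)
    _ = ∑ i ∈ Finset.range (⌊s⌋₊ + 1), ∑' n, ρ n {ω | f ω - (t + i) ∈ Set.Icc 0 1} :=
        Summable.tsum_finsetSum fun _ _ => ENNReal.summable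
    _ ≤ ∑ _i ∈ Finset.range (⌊s⌋₊ + 1), K := Finset.sum_le_sum fun _ _ => h _
    _ = (⌊s⌋₊ + 1 : ℕ) * K := by rw [Finset.sum_const, Finset.card_range, nsmul_eq_mul]
    _ ≤ ENNReal.ofReal (2 * max 1 s) * K := by
        gcongr
        rw [← ENNReal.ofReal_natCast]
        apply ENNReal.ofReal_le_ofReal
        push_cast
        linarith [Nat.floor_le hs, le_max_left 1 s, le_max_right 1 s]

/-- `σ` is an additive cocycle over the action of `G` on `X`. -/
def IsAddCocycle {G X : Type*} [Mul G] [SMul G X] (σ : G → X → ℝ) : Prop :=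
  ∀ g h x, σ (g * h) x = σ g (h • x) + σ h x

variable {G X : Type*} [Monoid G] [MeasurableSpace G] [MeasurableMul₂ G] [SMul G X]
  {μ : Measure G} [IsProbabilityMeasure μ] {σ : G → X → ℝ} {ε : ℝ} {a : ENNReal} {N : ℕ}

theorem mul_tsum_convPow_unitInterval_le (hσ : IsAddCocycle σ)
    (hm : ∀ x, Measurable fun g => σ g x) (hε : 0 ≤ ε) (ha : a ≤ 1)
    (h : ∀ x, ∫⁻ g, ENNReal.ofReal (Real.exp (-(ε * σ g x))) ∂convPow μ N ≤ a) (x : X) (t : ℝ) :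
    (1 - a) * ENNReal.ofReal (Real.exp (-ε)) *
      ∑' n, convPow μ n {g | σ g x - t ∈ Set.Icc 0 1} ≤ N := by
  have hmH (y : X) (r : ℝ) : Measurable fun g => expLyapunov ε (σ g y - r) :=
    (measurable_expLyapunov ε).comp ((hm y).sub_const r)
  refine mul_tsum_le_of_add_mul_le (u := fun n => ∫⁻ g, expLyapunov ε (σ g x - t) ∂convPow μ n)
    (fun n => (lintegral_mono fun _ => min_le_left _ _).trans (by simp)) fun n => ?_
  have hS : MeasurableSet {g | σ g x - t ∈ Set.Icc 0 1} :=
    measurableSet_Icc.preimage ((hm x).sub_const t)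
  rw [add_comm n N, lintegral_convPow_add μ N n (hmH x t), ← lintegral_indicator_one hS,
    ← lintegral_const_mul _ (measurable_one.indicator hS),
    ← lintegral_add_right _ ((measurable_one.indicator hS).const_mul _)]
  refine lintegral_mono fun g => ?_
  simp only [hσ _ g x, add_sub_assoc]
  exact lintegral_expLyapunov_add_le hε ha (h (g • x)) (σ g x - t)

theorem exists_renewal_bound_of_contraction (hσ : IsAddCocycle σ)
    (hm : ∀ x, Measurable fun g => σ g x) (hε : 0 ≤ ε) (ha : a < 1)
    (h : ∀ x, ∫⁻ g, ENNReal.ofReal (Real.exp (-(ε * σ g x))) ∂convPow μ N ≤ a) :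
    ∃ C > (0 : ℝ), ∀ (s t : ℝ) (x : X),
      ∑' n, convPow μ n {g | σ g x - t ∈ Set.Icc 0 s} ≤ ENNReal.ofReal (C * max 1 s) := by
  set κ : ENNReal := (1 - a) * ENNReal.ofReal (Real.exp (-ε))
  have hκ : κ ≠ 0 := mul_ne_zero (tsub_pos_of_lt ha).ne' (by simp [Real.exp_pos])
  have hκ' : κ ≠ ⊤ :=
    ENNReal.mul_ne_top (ne_top_of_le_ne_top ENNReal.one_ne_top tsub_le_self) ENNReal.ofReal_ne_top
  have unit_interval (x : X) (t : ℝ) :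
      ∑' n, convPow μ n {g | σ g x - t ∈ Set.Icc 0 1} ≤ ENNReal.ofReal (N / κ).toReal := by
    rw [ENNReal.ofReal_toReal (ENNReal.div_ne_top (ENNReal.natCast_ne_top N) hκ),
      ENNReal.le_div_iff_mul_le (.inl hκ) (.inl hκ'), mul_comm]
    exact mul_tsum_convPow_unitInterval_le hσ hm hε ha.le h x t
  refine ⟨2 * (N / κ).toReal + 1, by positivity, fun s t x => ?_⟩
  refine (tsum_measure_Icc_le (unit_interval x) s t).trans ?_
  rw [← ENNReal.ofReal_mul (by positivity)]
  apply ENNReal.ofReal_le_ofReal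
  nlinarith [le_max_left 1 s]

end Renewal

section Contraction

theorem exp_le_one_add_add_sq_mul_exp_abs (u : ℝ) :
    Real.exp u ≤ 1 + u + u ^ 2 * Real.exp |u| := by
  have exp_sub_one_le : Real.exp u - 1 ≤ u * Real.exp u := by
    have h := mul_le_mul_of_nonneg_right (Real.add_one_le_exp (-u)) (Real.exp_pos u).le
    rw [← Real.exp_add, neg_add_cancel, Real.exp_zero] at h
    linarith
  obtain hu | hu := le_total 0 u
  · rw [abs_of_nonneg hu]
    nlinarith
  · have h := Real.add_one_le_exp u
    have h' := Real.one_le_exp (abs_nonneg u)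
    nlinarith [sq_nonneg u]

variable {Ω : Type*} [MeasurableSpace Ω] {ρ : Measure Ω} {L f : Ω → ℝ} {δ : ℝ}

theorem integrable_of_abs_le_of_integrable_exp (hδ : 0 < δ)
    (hL : Integrable (fun ω => Real.exp (δ * L ω)) ρ) (hf : AEStronglyMeasurable f ρ)
    (hfL : ∀ ω, |f ω| ≤ L ω) : Integrable f ρ := by
  refine (hL.const_mul δ⁻¹).mono' hf (Eventually.of_forall fun ω => (hfL ω).trans ?_)
  rw [le_inv_mul_iff₀ hδ]
  linarith [Real.add_one_le_exp (δ * L ω)]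

theorem exp_neg_mul_le_of_abs_le {ε x l : ℝ} (hδ : 0 < δ) (hε : 0 ≤ ε) (hεδ : ε ≤ δ / 2)
    (hx : |x| ≤ l) :
    Real.exp (-(ε * x)) ≤ 1 - ε * x + ε ^ 2 * (8 / δ ^ 2 * Real.exp (δ * l)) := by
  have hl : 0 ≤ l := (abs_nonneg x).trans hx
  have exp_abs_le : Real.exp |-(ε * x)| ≤ Real.exp (δ / 2 * l) := by
    rw [abs_neg, abs_mul, abs_of_nonneg hε]
    gcongr
  have sq_le : x ^ 2 ≤ 8 / δ ^ 2 * Real.exp (δ / 2 * l) := by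
    have hquad := Real.quadratic_le_exp_of_nonneg (by positivity : 0 ≤ δ / 2 * l)
    have hxl : x ^ 2 ≤ l ^ 2 := sq_le_sq' (abs_le.1 hx).1 (abs_le.1 hx).2
    rw [div_mul_eq_mul_div, le_div_iff₀ (by positivity)]
    nlinarith [mul_le_mul_of_nonneg_right hxl (sq_nonneg δ), mul_nonneg hδ.le hl]
  calc Real.exp (-(ε * x))
      ≤ 1 + -(ε * x) + (-(ε * x)) ^ 2 * Real.exp |-(ε * x)| :=
        exp_le_one_add_add_sq_mul_exp_abs _
    _ ≤ 1 + -(ε * x) + ε ^ 2 * (8 / δ ^ 2 * Real.exp (δ / 2 * l)) * Real.exp (δ / 2 * l) := by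
        rw [neg_sq, mul_pow]
        gcongr
    _ = 1 - ε * x + ε ^ 2 * (8 / δ ^ 2 * Real.exp (δ * l)) := by
        rw [← add_halves δ, add_mul (δ / 2), Real.exp_add]
        ring_nf

theorem exists_lintegral_exp_neg_mul_le_of_drift [IsProbabilityMeasure ρ] {c : ℝ} (hδ : 0 < δ)
    (hL : Integrable (fun ω => Real.exp (δ * L ω)) ρ) (hc : 0 < c) :
    ∃ ε > 0, ∃ a < (1 : ENNReal), ∀ f : Ω → ℝ, AEStronglyMeasurable f ρ → (∀ ω, |f ω| ≤ L ω) →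
      c ≤ ∫ ω, f ω ∂ρ → ∫⁻ ω, ENNReal.ofReal (Real.exp (-(ε * f ω))) ∂ρ ≤ a := by
  set D := 8 / δ ^ 2 * ∫ ω, Real.exp (δ * L ω) ∂ρ with hDdef
  have hD : 0 ≤ D := mul_nonneg (by positivity) (integral_nonneg fun ω => (Real.exp_pos _).le)
  obtain ⟨ε, hε, hεδ, hεD⟩ : ∃ ε > 0, ε ≤ δ / 2 ∧ ε ≤ c / (2 * (D + 1)) :=
    ⟨min (δ / 2) (c / (2 * (D + 1))), by positivity, min_le_left _ _, min_le_right _ _⟩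
  rw [le_div_iff₀ (by positivity)] at hεD
  refine ⟨ε, hε, ENNReal.ofReal (1 - ε * c / 2), ?_, fun f hf hfL hdrift => ?_⟩
  · rw [ENNReal.ofReal_lt_one]
    linarith [mul_pos hε hc]
  have pointwise (ω : Ω) := exp_neg_mul_le_of_abs_le hδ hε.le hεδ (hfL ω)
  have hfi := integrable_of_abs_le_of_integrable_exp hδ hL hf hfL
  have h1 : Integrable (fun ω => 1 - ε * f ω) ρ := (integrable_const 1).sub (hfi.const_mul ε)
  have h2 := (hL.const_mul (8 / δ ^ 2)).const_mul (ε ^ 2)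
  calc ∫⁻ ω, ENNReal.ofReal (Real.exp (-(ε * f ω))) ∂ρ
      ≤ ∫⁻ ω, ENNReal.ofReal (1 - ε * f ω + ε ^ 2 * (8 / δ ^ 2 * Real.exp (δ * L ω))) ∂ρ :=
        lintegral_mono fun ω => ENNReal.ofReal_le_ofReal (pointwise ω)
    _ = ENNReal.ofReal (∫ ω, (1 - ε * f ω + ε ^ 2 * (8 / δ ^ 2 * Real.exp (δ * L ω))) ∂ρ) :=
        (ofReal_integral_eq_lintegral_ofReal (h1.add h2)
          (Eventually.of_forall fun ω => (Real.exp_pos _).le.trans (pointwise ω))).symm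
    _ = ENNReal.ofReal (1 - ε * ∫ ω, f ω ∂ρ + ε ^ 2 * D) := by
        rw [integral_add h1 h2, integral_sub (integrable_const 1) (hfi.const_mul ε),
          integral_const_mul, integral_const_mul, integral_const_mul, ← hDdef]
        simp
    _ ≤ ENNReal.ofReal (1 - ε * c / 2) := by
        apply ENNReal.ofReal_le_ofReal
        nlinarith [mul_nonneg hε.le hD]

end Contraction

/-! ### Stationary measures -/

section StationaryMeasures

/-- `ν` is stationary for the random walk driven by `μ`, that is `μ * ν = ν` for the action
of `G` on `X`. -/
def IsStationaryMeasure {G X : Type*} [SMul G X] [MeasurableSpace G] [MeasurableSpace X]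
    (μ : Measure G) (ν : Measure X) : Prop :=
  (μ.prod ν).map (fun p => p.1 • p.2) = ν

/-- The expectation of `f` at the `n`-th step of the random walk started at `x`. -/
def walkMean {G X : Type*} [Monoid G] [SMul G X] [MeasurableSpace G] (μ : Measure G) (n : ℕ)
    (f : X → ℝ) (x : X) : ℝ :=
  ∫ g, f (g • x) ∂convPow μ n

section Existence

variable {G X : Type*} [Monoid G] [TopologicalSpace G] [ContinuousMul G] [SecondCountableTopology G]
  [MeasurableSpace G] [BorelSpace G] [TopologicalSpace X] [MulAction G X] [ContinuousSMul G X]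
  (μ : Measure G) [IsProbabilityMeasure μ]

theorem isStationaryMeasure_of_integral_walkMean [MeasurableSpace X] [BorelSpace X]
    [HasOuterApproxClosed X] [SecondCountableTopology X] {ν : Measure X} [IsFiniteMeasure ν]
    (h : ∀ f : X → ℝ, Continuous f → ∫ x, walkMean μ 1 f x ∂ν = ∫ x, f x ∂ν) :
    IsStationaryMeasure μ ν := by
  refine ext_of_forall_integral_eq_of_IsFiniteMeasure fun f => ?_
  have hf := f.continuous
  rw [← h f hf, integral_map (by fun_prop) (by fun_prop), integral_prod_symm]
  · simp only [walkMean, convPow_one]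
  · exact .of_bound (Continuous.aestronglyMeasurable (by fun_prop)) ‖f‖
      (Eventually.of_forall fun p => f.norm_coe_le_norm _)

variable [CompactSpace X] {f : X → ℝ}

theorem exists_forall_norm_le_of_continuous (hf : Continuous f) : ∃ C, ∀ x, ‖f x‖ ≤ C := by
  obtain ⟨C, hC⟩ := isCompact_univ.exists_bound_of_continuousOn hf.continuousOn
  exact ⟨C, fun x => hC x trivial⟩

theorem integrable_comp_smul_convPow (hf : Continuous f) (n : ℕ) (x : X) :
    Integrable (fun g => f (g • x)) (convPow μ n) :=
  let ⟨C, hC⟩ := exists_forall_norm_le_of_continuous hf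
  .of_bound (Continuous.aestronglyMeasurable (by fun_prop)) C (Eventually.of_forall fun _ => hC _)

theorem continuous_walkMean [FirstCountableTopology X] (hf : Continuous f) (n : ℕ) :
    Continuous (walkMean μ n f) := by
  obtain ⟨C, hC⟩ := exists_forall_norm_le_of_continuous hf
  exact continuous_of_dominated
    (fun x => Continuous.aestronglyMeasurable (f := fun g => f (g • x)) (by fun_prop))
    (fun x => Eventually.of_forall fun g => hC _) (integrable_const C)
    (Eventually.of_forall fun g => by fun_prop)

theorem walkMean_add (hf : Continuous f) (m n : ℕ) (x : X) :
    walkMean μ (m + n) f x = walkMean μ n (walkMean μ m f) x := by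
  simp only [walkMean, integral_convPow_add μ m n (integrable_comp_smul_convPow μ hf (m + n) x),
    mul_smul]

variable [MeasurableSpace X] [BorelSpace X]

/-- The Cesàro mean of the laws of the first `k + 1` positions of the walk started at `x`. -/
def walkEmpirical (k : ℕ) (x : X) : Measure X :=
  ((k : ENNReal) + 1)⁻¹ • ∑ j ∈ Finset.range (k + 1), (convPow μ j).map (· • x)

instance isProbabilityMeasure_walkEmpirical (k : ℕ) (x : X) :
    IsProbabilityMeasure (walkEmpirical μ k x) := by
  have hmap (j : ℕ) : IsProbabilityMeasure ((convPow μ j).map (· • x)) :=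
    Measure.isProbabilityMeasure_map (by fun_prop)
  constructor
  simp only [walkEmpirical, Measure.smul_apply, Measure.finsetSum_apply, measure_univ,
    Finset.sum_const, Finset.card_range, smul_eq_mul, nsmul_eq_mul, mul_one, Nat.cast_add,
    Nat.cast_one]
  exact ENNReal.inv_mul_cancel (by simp) (by finiteness)

theorem integral_walkEmpirical (hf : Continuous f) (k : ℕ) (x : X) :
    ∫ y, f y ∂walkEmpirical μ k x =
      ((k : ℝ) + 1)⁻¹ * ∑ j ∈ Finset.range (k + 1), walkMean μ j f x := by
  have hmap (j : ℕ) : AEMeasurable (fun g : G => g • x) (convPow μ j) := by fun_prop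
  have hfm (ρ : Measure X) : AEStronglyMeasurable f ρ := by fun_prop
  rw [walkEmpirical, integral_smul_measure, integral_finsetSum_measure]
  · simp only [integral_map (hmap _) (hfm _), walkMean, smul_eq_mul, ENNReal.toReal_inv]
    congr
  · exact fun j _ =>
      (integrable_map_measure (hfm _) (hmap j)).2 (integrable_comp_smul_convPow μ hf j x)

theorem tendsto_integral_walkMean_sub_walkEmpirical [FirstCountableTopology X] (hf : Continuous f)
    (x : ℕ → X) :
    Tendsto (fun k => ∫ y, walkMean μ 1 f y ∂walkEmpirical μ k (x k) -
      ∫ y, f y ∂walkEmpirical μ k (x k)) atTop (nhds 0) := by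
  obtain ⟨C, hC⟩ := exists_forall_norm_le_of_continuous hf
  have walkMean_le (j : ℕ) (y : X) : ‖walkMean μ j f y‖ ≤ C := by
    simpa [walkMean] using norm_integral_le_of_norm_le_const (μ := convPow μ j)
      (Eventually.of_forall fun g => hC (g • y))
  have telescope (k : ℕ) (y : X) :
      ∫ z, walkMean μ 1 f z ∂walkEmpirical μ k y - ∫ z, f z ∂walkEmpirical μ k y =
        ((k : ℝ) + 1)⁻¹ * (walkMean μ (k + 1) f y - walkMean μ 0 f y) := by
    rw [integral_walkEmpirical μ (continuous_walkMean μ hf 1), integral_walkEmpirical μ hf,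
      ← mul_sub, ← Finset.sum_sub_distrib, ← Finset.sum_range_sub (walkMean μ · f y)]
    simp only [← walkMean_add μ hf, add_comm 1]
  have hlim : Tendsto (fun k : ℕ => ((k : ℝ) + 1)⁻¹ * (C + C)) atTop (nhds 0) := by
    simpa using (tendsto_one_div_add_atTop_nhds_zero_nat (𝕜 := ℝ)).mul_const (C + C)
  refine squeeze_zero_norm (fun k => ?_) hlim
  rw [telescope, norm_mul, Real.norm_of_nonneg (by positivity)]
  gcongr
  exact (norm_sub_le _ _).trans (add_le_add (walkMean_le _ _) (walkMean_le _ _))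

theorem exists_isStationaryMeasure_integral_nonpos [HasOuterApproxClosed X]
    [SecondCountableTopology X] [T2Space X] {φ : X → ℝ} (hφ : Continuous φ)
    (h : ∀ n, ∃ x, ∑ j ∈ Finset.range n, walkMean μ j φ x < 1) :
    ∃ ν : Measure X, IsProbabilityMeasure ν ∧ IsStationaryMeasure μ ν ∧ ∫ x, φ x ∂ν ≤ 0 := by
  choose x hx using h
  let empirical (k : ℕ) : ProbabilityMeasure X := ⟨walkEmpirical μ k (x (k + 1)), inferInstance⟩
  let U : Ultrafilter ℕ := hyperfilter ℕ
  have hU : (U : Filter ℕ) ≤ atTop := Nat.hyperfilter_le_atTop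
  obtain ⟨ν, -, hν⟩ := isCompact_univ.ultrafilter_le_nhds (U.map empirical) (by simp)
  have lim {f : X → ℝ} (hf : Continuous f) : Tendsto
      (fun k => ∫ y, f y ∂walkEmpirical μ k (x (k + 1))) U (nhds (∫ y, f y ∂(ν : Measure X))) :=
    ProbabilityMeasure.tendsto_iff_forall_integral_tendsto.1 hν
      (BoundedContinuousFunction.mkOfCompact ⟨f, hf⟩)
  refine ⟨ν, inferInstance, isStationaryMeasure_of_integral_walkMean μ fun f hf => ?_, ?_⟩
  · exact sub_eq_zero.1 <| tendsto_nhds_unique ((lim (continuous_walkMean μ hf 1)).sub (lim hf))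
      ((tendsto_integral_walkMean_sub_walkEmpirical μ hf fun k => x (k + 1)).mono_left hU)
  · refine le_of_tendsto_of_tendsto' (lim hφ)
      ((tendsto_one_div_add_atTop_nhds_zero_nat (𝕜 := ℝ)).mono_left hU) fun k => ?_
    rw [integral_walkEmpirical μ hφ, one_div]
    exact mul_le_of_le_one_right (by positivity) (hx (k + 1)).le

end Existence

section Atoms

variable {G X : Type*} [Group G] [MeasurableSpace G] [MeasurableSpace X]
  [MeasurableSingletonClass X] [MulAction G X] {μ : Measure G} {ν : Measure X} [IsFiniteMeasure ν]

theorem finite_setOf_le_measure_singleton {c : ENNReal} (hc : c ≠ 0) :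
    {x | c ≤ ν {x}}.Finite :=
  Measure.finite_const_le_meas_of_disjoint_iUnion ν (pos_iff_ne_zero.2 hc) measurableSet_singleton
    (fun _ _ hxy => Set.disjoint_singleton.2 hxy) (measure_ne_top _ _)

theorem exists_forall_measure_singleton_le {x : X} (hx : ν {x} ≠ 0) :
    ∃ z, ν {z} ≠ 0 ∧ ∀ y, ν {y} ≤ ν {z} := by
  obtain ⟨z, hxz, hz⟩ := (finite_setOf_le_measure_singleton hx).exists_maximalFor
    (fun y => ν {y}) _ ⟨x, le_refl (ν {x})⟩
  refine ⟨z, ((pos_iff_ne_zero.2 hx).trans_le hxz).ne', fun y => ?_⟩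
  obtain hy | hy := le_total (ν {y}) (ν {z})
  · exact hy
  · exact hz (hxz.trans hy) hy

variable [MeasurableSMul₂ G X]

theorem IsStationaryMeasure.measure_singleton (hν : IsStationaryMeasure μ ν) (x : X) :
    ν {x} = ∫⁻ g, ν {g⁻¹ • x} ∂μ := by
  have hm : Measurable fun p : G × X => p.1 • p.2 := measurable_smul
  conv_lhs => rw [← hν, Measure.map_apply hm (measurableSet_singleton x),
    Measure.prod_apply (hm (measurableSet_singleton x))]
  congr! with g
  ext y
  simp [eq_inv_smul_iff]

open scoped Pointwise in
theorem IsStationaryMeasure.exists_finite_ae_mem_stabilizer [IsProbabilityMeasure μ]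
    (hν : IsStationaryMeasure μ ν) {x : X} (hx : ν {x} ≠ 0) :
    ∃ F : Set X, F.Finite ∧ F.Nonempty ∧ ∀ᵐ g ∂μ, g ∈ MulAction.stabilizer G F := by
  obtain ⟨z, hz, hmax⟩ := exists_forall_measure_singleton_le hx
  set F : Set X := {y | ν {z} ≤ ν {y}}
  have hF : F.Finite := finite_setOf_le_measure_singleton hz
  -- The mass of a point is the average of the masses of its preimages, so if it is maximal, then
  -- so are almost all of theirs.
  have preimage_maximal (y : X) (hy : y ∈ F) : ∀ᵐ g ∂μ, g⁻¹ • y ∈ F := by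
    have hle : ∫⁻ _, ν {z} ∂μ ≤ ∫⁻ g, ν {g⁻¹ • y} ∂μ := by
      rw [← hν.measure_singleton y]
      simpa [F] using hy
    filter_upwards [ae_eq_of_ae_le_of_lintegral_le (Eventually.of_forall fun g => hmax (g⁻¹ • y))
      (by rw [← hν.measure_singleton y]; exact measure_ne_top _ _) aemeasurable_const hle]
      with g hg using hg.ge
  refine ⟨F, hF, ⟨z, le_refl (ν {z})⟩, ?_⟩
  filter_upwards [(ae_ball_iff hF.countable).2 preimage_maximal] with g hg
  rw [← inv_mem_iff, MulAction.mem_stabilizer_set_iff_smul_set_subset hF]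
  exact Set.smul_set_subset_iff.2 fun y => hg y

end Atoms

open scoped Pointwise in
theorem isClosed_stabilizer_of_finite {G X : Type*} [Group G] [TopologicalSpace G]
    [TopologicalSpace X] [T1Space X] [MulAction G X] [ContinuousSMul G X] {F : Set X}
    (hF : F.Finite) : IsClosed (MulAction.stabilizer G F : Set G) := by
  have h : (MulAction.stabilizer G F : Set G) = ⋂ x ∈ F, (· • x) ⁻¹' F := by
    ext g
    simp only [SetLike.mem_coe, MulAction.mem_stabilizer_set_iff_smul_set_subset hF,
      Set.smul_set_subset_iff, Set.mem_iInter, Set.mem_preimage]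
  rw [h]
  exact isClosed_biInter fun x _ => hF.isClosed.preimage (by fun_prop)

end StationaryMeasures

section CocycleMeans

variable {G X : Type*} [Monoid G] [TopologicalSpace G] [ContinuousMul G] [SecondCountableTopology G]
  [MeasurableSpace G] [BorelSpace G] [MeasurableSingletonClass G] [TopologicalSpace X]
  [CompactSpace X] [MulAction G X] [ContinuousSMul G X] {μ : Measure G} [IsProbabilityMeasure μ]
  {σ : G → X → ℝ}

theorem sum_walkMean_eq_integral_cocycle (hσ : IsAddCocycle σ)
    (hint : ∀ n x, Integrable (σ · x) (convPow μ n)) (hφ : Continuous fun x => ∫ g, σ g x ∂μ)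
    (n : ℕ) (x : X) :
    ∑ j ∈ Finset.range n, walkMean μ j (fun y => ∫ g, σ g y ∂μ) x = ∫ g, σ g x ∂convPow μ n := by
  induction n with
  | zero =>
    have hσ_one : σ 1 x = 0 := by simpa using hσ 1 1 x
    simp [convPow, hσ_one]
  | succ n ih =>
    have hint_one (y : X) : Integrable (σ · y) μ := by simpa only [convPow_one] using hint 1 y
    have inner (h : G) :
        ∫ g, σ (g * h) x ∂convPow μ 1 = ∫ g, σ g (h • x) ∂μ + σ h x := by
      simp only [convPow_one, hσ _ h x]
      rw [integral_add (hint_one _) (integrable_const _)]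
      simp
    rw [Finset.sum_range_succ, ih, add_comm n 1, integral_convPow_add μ 1 n (hint (1 + n) x)]
    simp only [inner]
    rw [integral_add (integrable_comp_smul_convPow μ hφ n x) (hint n x), add_comm, walkMean]

variable [MeasurableSpace X] [BorelSpace X] [SecondCountableTopology X] {ν : Measure X}
  [IsProbabilityMeasure ν] {f : X → ℝ}

theorem IsStationaryMeasure.integral_walkMean (hν : IsStationaryMeasure μ ν) (hf : Continuous f)
    (n : ℕ) : ∫ x, walkMean μ n f x ∂ν = ∫ x, f x ∂ν := by
  have one_step {f : X → ℝ} (hf : Continuous f) : ∫ x, walkMean μ 1 f x ∂ν = ∫ x, f x ∂ν := by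
    obtain ⟨C, hC⟩ := exists_forall_norm_le_of_continuous hf
    have hf' : AEStronglyMeasurable f ((μ.prod ν).map fun p => p.1 • p.2) :=
      hf.aestronglyMeasurable
    conv_rhs => rw [← hν, integral_map (by fun_prop) hf', integral_prod_symm _
      (.of_bound (Continuous.aestronglyMeasurable (by fun_prop)) C
        (Eventually.of_forall fun p => hC _))]
    simp only [walkMean, convPow_one]
  induction n with
  | zero => simp [walkMean, convPow]
  | succ n ih =>
    simp only [walkMean_add μ hf]
    rw [one_step (continuous_walkMean μ hf n), ih]

theorem IsStationaryMeasure.integral_integral_cocycle (hν : IsStationaryMeasure μ ν)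
    (hσ : IsAddCocycle σ) (hint : ∀ n x, Integrable (σ · x) (convPow μ n))
    (hφ : Continuous fun x => ∫ g, σ g x ∂μ) (n : ℕ) :
    ∫ x, ∫ g, σ g x ∂convPow μ n ∂ν = n * ∫ x, ∫ g, σ g x ∂μ ∂ν := by
  simp only [← sum_walkMean_eq_integral_cocycle hσ hint hφ]
  have hcont (j : ℕ) := continuous_walkMean μ hφ j
  rw [integral_finsetSum]
  · simp [hν.integral_walkMean hφ]
  · intro j _
    obtain ⟨C, hC⟩ := exists_forall_norm_le_of_continuous (hcont j)
    exact .of_bound (hcont j).aestronglyMeasurable C (Eventually.of_forall hC)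

end CocycleMeans

/-! ### Escape of mass on `L²` -/

section Koopman

open scoped DomMulAct

open scoped RealInnerProductSpace

theorem inner_indicatorConstLp_mk_smul {G X : Type*} [Monoid G] [MeasurableSpace X]
    [MulAction G X] [MeasurableConstSMul G X] (m : Measure X) [SMulInvariantMeasure G X m] (g : G)
    {A : Set X} (hA : MeasurableSet A) (hA' : m A ≠ ⊤) :
    ⟪indicatorConstLp 2 hA hA' (1 : ℝ), DomMulAct.mk g • indicatorConstLp 2 hA hA' (1 : ℝ)⟫ =
      m.real (A ∩ (g • ·) ⁻¹' A) := by
  rw [DomMulAct.mk_smul_indicatorConstLp,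
    L2.real_inner_indicatorConstLp_one_indicatorConstLp_one hA
      (hA.preimage (measurable_const_smul g)) hA'
      (by rwa [measure_preimage_smul_of_nullMeasurableSet hA.nullMeasurableSet])]

variable {G X : Type*} [Monoid G] [TopologicalSpace G] [MeasurableSpace G] [BorelSpace G]
  [TopologicalSpace X] [R1Space X] [MeasurableSpace X] [BorelSpace X] [MulAction G X]
  [ContinuousSMul G X] (m : Measure X) [IsLocallyFiniteMeasure m] [m.InnerRegularCompactLTTop]
  [SMulInvariantMeasure G X m]

theorem continuous_mk_smul_Lp (f : Lp ℝ 2 m) : Continuous fun g : G => DomMulAct.mk g • f :=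
  haveI : Fact ((2 : ENNReal) ≠ ⊤) := ⟨ENNReal.ofNat_ne_top⟩
  DomMulAct.continuous_mk.smul continuous_const

variable [SecondCountableTopology G] (μ : Measure G) [IsProbabilityMeasure μ]

theorem integrable_mk_smul_Lp (f : Lp ℝ 2 m) : Integrable (fun g : G => DomMulAct.mk g • f) μ :=
  .of_bound (continuous_mk_smul_Lp m f).aestronglyMeasurable ‖f‖
    (Eventually.of_forall fun g => (DomMulAct.norm_smul_Lp (DomMulAct.mk g) f).le)

theorem integrable_measureReal_inter_preimage_smul {A : Set X} (hA : MeasurableSet A)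
    (hA' : m A ≠ ⊤) : Integrable (fun g : G => m.real (A ∩ (g • ·) ⁻¹' A)) μ := by
  simpa only [inner_indicatorConstLp_mk_smul] using
    (integrable_mk_smul_Lp m μ (indicatorConstLp 2 hA hA' (1 : ℝ))).const_inner (𝕜 := ℝ)
      (indicatorConstLp 2 hA hA' (1 : ℝ))

/-- The `μ`-average `f ↦ ∫ f ∘ g dμ(g)` of the Koopman operators on `L²`; `DomMulAct.mk g • f` is
the composition of `f` with the action of `g`. -/
def koopmanMean : Lp ℝ 2 m →L[ℝ] Lp ℝ 2 m :=
  LinearMap.mkContinuous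
    { toFun f := ∫ g : G, DomMulAct.mk g • f ∂μ
      map_add' f f' := by
        simp only [smul_add]
        exact integral_add (integrable_mk_smul_Lp m μ f) (integrable_mk_smul_Lp m μ f')
      map_smul' c f := by simp only [smul_comm _ c, integral_smul, RingHom.id_apply] }
    1 fun f => by
      simpa using norm_integral_le_of_norm_le_const (μ := μ)
        (Eventually.of_forall fun g => (DomMulAct.norm_smul_Lp (DomMulAct.mk g) f).le)

theorem koopmanMean_apply (f : Lp ℝ 2 m) : koopmanMean m μ f = ∫ g, DomMulAct.mk g • f ∂μ := rfl

theorem norm_koopmanMean_le_one : ‖koopmanMean m μ‖ ≤ 1 :=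
  LinearMap.mkContinuous_norm_le _ zero_le_one _

theorem ae_mk_smul_eq_of_koopmanMean_eq {f : Lp ℝ 2 m} (hf : koopmanMean m μ f = f) :
    ∀ᵐ g ∂μ, DomMulAct.mk g • f = f := by
  obtain h | h := ae_eq_const_or_norm_integral_lt_of_norm_le_const (μ := μ)
    (Eventually.of_forall fun g => (DomMulAct.norm_smul_Lp (DomMulAct.mk g) f).le)
  · filter_upwards [h] with g hg
    rw [hg, Function.const_apply, average_eq_integral, ← koopmanMean_apply, hf]
  · rw [← koopmanMean_apply, hf] at h
    simp at h

theorem tendsto_birkhoffAverage_koopmanMean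
    (hfix : ∀ f : Lp ℝ 2 m, (∀ᵐ g ∂μ, DomMulAct.mk g • f = f) → f = 0) (f : Lp ℝ 2 m) :
    Tendsto (birkhoffAverage ℝ (koopmanMean m μ) _root_.id · f) atTop (nhds 0) := by
  have h := (koopmanMean m μ).tendsto_birkhoffAverage_orthogonalProjection
    (norm_koopmanMean_le_one m μ) f
  rwa [hfix _ (ae_mk_smul_eq_of_koopmanMean_eq m μ (SetLike.coe_mem
    (((koopmanMean m μ).eqLocus (1 : Lp ℝ 2 m →L[ℝ] Lp ℝ 2 m)).orthogonalProjectionOnto f)))] at h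

variable [ContinuousMul G]

theorem koopmanMean_iterate (n : ℕ) (f : Lp ℝ 2 m) :
    (koopmanMean m μ)^[n] f = ∫ g, DomMulAct.mk g • f ∂convPow μ n := by
  induction n with
  | zero =>
    rw [convPow, integral_dirac' (fun g : G => DomMulAct.mk g • f) 1
      (continuous_mk_smul_Lp m f).stronglyMeasurable, DomMulAct.mk_one, one_smul,
      Function.iterate_zero_apply]
  | succ n ih =>
    rw [Function.iterate_succ_apply', ih, koopmanMean_apply,
      integral_convPow_add μ n 1 (integrable_mk_smul_Lp m _ f), convPow_one]
    congr! with g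
    have hmul (h : G) : DomMulAct.mk (h * g) • f = DomMulAct.mk g • DomMulAct.mk h • f := by
      rw [DomMulAct.mk_mul, mul_smul]
    simp only [hmul]
    exact ((Lp.compMeasurePreservingₗᵢ ℝ (E := ℝ) (p := 2) (g • ·)
      (measurePreserving_smul g m)).toContinuousLinearMap.integral_comp_comm
        (integrable_mk_smul_Lp m _ f)).symm

theorem exists_integral_measureReal_inter_preimage_smul_lt
    (hfix : ∀ f : Lp ℝ 2 m, (∀ᵐ g ∂μ, DomMulAct.mk g • f = f) → f = 0) {A : Set X}
    (hA : MeasurableSet A) (hA' : m A ≠ ⊤) {η : ℝ} (hη : 0 < η) :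
    ∃ n, ∫ g : G, m.real (A ∩ (g • ·) ⁻¹' A) ∂convPow μ n < η := by
  set f := indicatorConstLp 2 hA hA' (1 : ℝ)
  have hlim : Tendsto (fun N => ⟪f, birkhoffAverage ℝ (koopmanMean m μ) _root_.id N f⟫) atTop
      (nhds 0) := by
    simpa using (tendsto_const_nhds (x := f)).inner (tendsto_birkhoffAverage_koopmanMean m μ hfix f)
  obtain ⟨N, hN, hN0⟩ := ((hlim.eventually (gt_mem_nhds hη)).and (eventually_gt_atTop 0)).exists
  have inner_iterate (n : ℕ) :
      ⟪f, (koopmanMean m μ)^[n] f⟫ = ∫ g : G, m.real (A ∩ (g • ·) ⁻¹' A) ∂convPow μ n := by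
    rw [koopmanMean_iterate, ← integral_inner (integrable_mk_smul_Lp m _ _)]
    simp only [f, inner_indicatorConstLp_mk_smul]
  simp only [birkhoffAverage, birkhoffSum, inner_smul_right, inner_sum, _root_.id,
    inner_iterate] at hN
  rw [inv_mul_lt_iff₀ (by exact_mod_cast hN0)] at hN
  obtain ⟨n, -, hn⟩ := Finset.exists_lt_of_sum_lt (s := Finset.range N) (g := fun _ => η)
    (by simpa using hN)
  exact ⟨n, hn⟩

end Koopman

section Nonconcentration

variable {X : Type*} [MeasurableSpace X] (m : Measure X) [IsFiniteMeasure m]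

theorem integrable_exp_neg_natCast_mul_abs {f : X → ℝ} (hf : Measurable f) (k : ℕ) :
    Integrable (fun x => Real.exp (-(k * |f x|))) m :=
  .of_bound (by fun_prop) 1 (Eventually.of_forall fun x => by
    rw [Real.norm_of_nonneg (Real.exp_nonneg _), Real.exp_le_one_iff, neg_nonpos]
    positivity)

theorem tendsto_integral_exp_neg_natCast_mul_abs {f : X → ℝ} (hf : Measurable f)
    (h0 : m {x | f x = 0} = 0) :
    Tendsto (fun k : ℕ => ∫ x, Real.exp (-(k * |f x|)) ∂m) atTop (nhds 0) := by
  rw [← integral_zero X ℝ (μ := m)]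
  refine tendsto_integral_of_dominated_convergence 1
    (fun k => (integrable_exp_neg_natCast_mul_abs m hf k).aestronglyMeasurable)
    (integrable_const _) (fun k => Eventually.of_forall fun x => ?_) ?_
  · rw [Real.norm_of_nonneg (Real.exp_nonneg _), Pi.one_apply, Real.exp_le_one_iff, neg_nonpos]
    positivity
  · filter_upwards [measure_eq_zero_iff_ae_notMem.1 h0] with x hx
    exact Real.tendsto_exp_neg_atTop_nhds_zero.comp
      (tendsto_natCast_atTop_atTop.atTop_mul_const (abs_pos.2 hx))

theorem measureReal_abs_lt_inv_le {f : X → ℝ} (hf : Measurable f) {k : ℕ} (hk : 0 < k) :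
    m.real {x | |f x| < (k : ℝ)⁻¹} ≤ Real.exp 1 * ∫ x, Real.exp (-(k * |f x|)) ∂m := by
  have hsub : {x | |f x| < (k : ℝ)⁻¹} ⊆ {x | Real.exp (-1) ≤ Real.exp (-(k * |f x|))} := by
    intro x hx
    have hx' := (lt_inv_mul_iff₀ (b := 1) (by exact_mod_cast hk : (0 : ℝ) < k)).1
      (by simpa using hx)
    exact Real.exp_le_exp.2 (neg_le_neg hx'.le)
  rw [← inv_mul_le_iff₀ (Real.exp_pos 1), ← Real.exp_neg]
  exact (mul_le_mul_of_nonneg_left (measureReal_mono hsub) (Real.exp_nonneg _)).trans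
    (mul_meas_ge_le_integral_of_nonneg (Eventually.of_forall fun x => Real.exp_nonneg _)
      (integrable_exp_neg_natCast_mul_abs m hf k) _)

theorem exists_forall_measureReal_abs_lt_le {U : Type*} [TopologicalSpace U] [CompactSpace U]
    [FirstCountableTopology U] {F : U → X → ℝ} (hF : ∀ u, Measurable (F u))
    (hF' : ∀ x, Continuous (F · x)) (h0 : ∀ u, m {x | F u x = 0} = 0) {η : ℝ} (hη : 0 < η) :
    ∃ δ > 0, ∀ u, m.real {x | |F u x| < δ} ≤ η := by
  have hint (k : ℕ) (u : U) := integrable_exp_neg_natCast_mul_abs m (hF u) k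
  have hanti : Antitone fun (k : ℕ) (u : U) => ∫ x, Real.exp (-(k * |F u x|)) ∂m :=
    fun k l hkl u => integral_mono (hint l u) (hint k u) fun x => by gcongr
  have hcont (k : ℕ) : Continuous fun u => ∫ x, Real.exp (-(k * |F u x|)) ∂m := by
    refine continuous_of_dominated (bound := 1) (fun u => (hint k u).aestronglyMeasurable)
      (fun u => Eventually.of_forall fun x => ?_) (integrable_const _)
      (Eventually.of_forall fun x => by fun_prop)
    rw [Real.norm_of_nonneg (Real.exp_nonneg _), Pi.one_apply, Real.exp_le_one_iff, neg_nonpos]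
    positivity
  have hdini := hanti.tendstoUniformly_of_forall_tendsto hcont continuous_const
    fun u => tendsto_integral_exp_neg_natCast_mul_abs m (hF u) (h0 u)
  obtain ⟨k, hk, hk0⟩ := ((Metric.tendstoUniformly_iff.1 hdini ((Real.exp 1)⁻¹ * η)
    (by positivity)).and (eventually_gt_atTop 0)).exists
  refine ⟨(k : ℝ)⁻¹, by positivity, fun u => (measureReal_abs_lt_inv_le m (hF u) hk0).trans ?_⟩
  rw [← le_inv_mul_iff₀ (Real.exp_pos 1)]
  exact (le_abs_self _).trans (by simpa [dist_zero_left] using (hk u).le)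

end Nonconcentration

section Furstenberg

open scoped RealInnerProductSpace

variable {E : Type*} [NormedAddCommGroup E] [InnerProductSpace ℝ E] [FiniteDimensional ℝ E]

theorem exists_norm_eq_one_norm_map_eq [Nontrivial E] {F : Type*} [NormedAddCommGroup F]
    [NormedSpace ℝ F] (T : E →L[ℝ] F) : ∃ u, ‖u‖ = 1 ∧ ‖T u‖ = ‖T‖ := by
  obtain ⟨u, hu, hmax⟩ := (isCompact_sphere (0 : E) 1).exists_isMaxOn
    (NormedSpace.sphere_nonempty.2 zero_le_one) T.continuous.norm.continuousOn
  rw [mem_sphere_zero_iff_norm] at hu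
  refine ⟨u, hu, le_antisymm (by simpa [hu] using T.le_opNorm u) ?_⟩
  exact T.opNorm_le_of_unit_norm (norm_nonneg _) fun v hv => hmax (mem_sphere_zero_iff_norm.2 hv)

theorem exists_forall_norm_mul_abs_inner_le [Nontrivial E] {F : Type*} [NormedAddCommGroup F]
    [InnerProductSpace ℝ F] [CompleteSpace F] (T : E →L[ℝ] F) :
    ∃ u : E, ‖u‖ = 1 ∧ ∀ v, ‖T‖ * |⟪u, v⟫| ≤ ‖T v‖ := by
  have := FiniteDimensional.complete ℝ E
  obtain ⟨u, hu, hTu⟩ := exists_norm_eq_one_norm_map_eq T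
  refine ⟨u, hu, fun v => ?_⟩
  -- A unit vector maximizing `‖T u‖` is an eigenvector of `T† T`.
  have heig : T.adjoint (T u) = ‖T‖ ^ 2 • u := by
    have hle : ‖T.adjoint (T u)‖ ≤ ‖T‖ ^ 2 := by
      simpa [hTu, sq] using T.adjoint.le_opNorm (T u)
    have hsq := norm_sub_sq_real (T.adjoint (T u)) (‖T‖ ^ 2 • u)
    rw [inner_smul_right, T.adjoint_inner_left, real_inner_self_eq_norm_sq, hTu, norm_smul, hu,
      Real.norm_of_nonneg (by positivity)] at hsq
    rw [← sub_eq_zero, ← norm_le_zero_iff]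
    nlinarith [norm_nonneg (T.adjoint (T u) - ‖T‖ ^ 2 • u), norm_nonneg (T.adjoint (T u))]
  obtain hT | hT := (norm_nonneg T).eq_or_lt
  · simp [← hT]
  have hcs := abs_real_inner_le_norm (T u) (T v)
  rw [← T.adjoint_inner_left, heig, real_inner_smul_left, abs_mul, abs_of_pos (by positivity), hTu,
    sq, mul_assoc] at hcs
  exact le_of_mul_le_mul_left hcs hT

variable [MeasurableSpace E] [BorelSpace E]

theorem exists_forall_measureReal_abs_inner_lt_le (m : Measure E) [IsFiniteMeasure m]
    (hm : ∀ u : E, ‖u‖ = 1 → m {v | ⟪u, v⟫ = 0} = 0) {η : ℝ} (hη : 0 < η) :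
    ∃ δ > 0, ∀ u : E, ‖u‖ = 1 → m.real {v | |⟪u, v⟫| < δ} ≤ η := by
  obtain ⟨δ, hδ, h⟩ := exists_forall_measureReal_abs_lt_le m
    (F := fun (u : Metric.sphere (0 : E) 1) v => ⟪(u : E), v⟫) (fun u => by fun_prop)
    (fun v => by fun_prop) (fun u => hm u (norm_eq_of_mem_sphere u)) hη
  exact ⟨δ, hδ, fun u hu => h ⟨u, mem_sphere_zero_iff_norm.2 hu⟩⟩

theorem exists_forall_norm_le_of_measurePreserving [Nontrivial E] (m : Measure E)
    [IsFiniteMeasure m] (hm0 : m ≠ 0) (hm : ∀ u : E, ‖u‖ = 1 → m {v | ⟪u, v⟫ = 0} = 0) :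
    ∃ R, ∀ T : E →L[ℝ] E, MeasurePreserving T m m → ‖T‖ ≤ R := by
  have hpos : 0 < m.real Set.univ := by
    rw [measureReal_def]
    exact ENNReal.toReal_pos (by simpa using hm0) (measure_ne_top _ _)
  obtain ⟨r, hr⟩ : ∃ r : ℕ, m.real Set.univ / 2 < m.real (Metric.closedBall 0 r) := by
    have ht := tendsto_measure_iUnion_atTop (μ := m) (s := fun r : ℕ => Metric.closedBall (0 : E) r)
      fun a b hab => Metric.closedBall_subset_closedBall (by exact_mod_cast hab)
    rw [Metric.iUnion_closedBall_nat] at ht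
    exact (((ENNReal.tendsto_toReal (measure_ne_top _ _)).comp ht).eventually
      (lt_mem_nhds (half_lt_self hpos))).exists
  obtain ⟨δ, hδ, h⟩ := exists_forall_measureReal_abs_inner_lt_le m hm (half_pos hpos)
  refine ⟨r / δ, fun T hT => ?_⟩
  -- Furstenberg's argument: a large `T` would push more than half of the mass out of the ball.
  by_contra! hlt
  rw [div_lt_iff₀ hδ] at hlt
  obtain ⟨u, hu, huT⟩ := exists_forall_norm_mul_abs_inner_le T
  have hsub : T ⁻¹' Metric.closedBall 0 r ⊆ {v | |⟪u, v⟫| < δ} := fun v hv =>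
    lt_of_mul_lt_mul_left (((huT v).trans (by simpa using hv)).trans_lt hlt) (norm_nonneg T)
  have hle := (measureReal_mono hsub).trans (h u hu)
  rw [measureReal_def, hT.measure_preimage measurableSet_closedBall.nullMeasurableSet] at hle
  exact hle.not_gt hr

theorem addHaar_setOf_inner_eq_zero (m : Measure E) [m.IsAddHaarMeasure] {u : E} (hu : u ≠ 0) :
    m {v | ⟪u, v⟫ = 0} = 0 := by
  have hset : {v | ⟪u, v⟫ = 0} = ((ℝ ∙ u)ᗮ : Submodule ℝ E) := by
    ext v
    exact Submodule.mem_orthogonal_singleton_iff_inner_right.symm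
  rw [hset]
  refine Measure.addHaar_submodule m _ fun htop => hu ?_
  rw [Submodule.orthogonal_eq_top_iff] at htop
  simpa using htop

theorem measurePreserving_withDensity {X : Type*} [MeasurableSpace X] {m : Measure X} {T : X → X}
    (hT : MeasurePreserving T m m) {φ : X → ENNReal} (hφ : AEMeasurable φ m)
    (h : φ ∘ T =ᵐ[m] φ) : MeasurePreserving T (m.withDensity φ) (m.withDensity φ) := by
  refine ⟨hT.measurable, Measure.ext fun s hs => ?_⟩
  have hres := hT.restrict_preimage hs
  rw [Measure.map_apply hT.measurable hs, withDensity_apply _ (hT.measurable hs),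
    withDensity_apply _ hs, ← lintegral_congr_ae (ae_restrict_of_ae h), ← hres.map_eq]
  exact (lintegral_map' (by rw [hres.map_eq]; exact hφ.restrict) hres.aemeasurable).symm

theorem exists_forall_norm_le_of_comp_ae_eq [Nontrivial E] {m : Measure E} [m.IsAddHaarMeasure]
    {f : E → ℝ} (hf : MemLp f 2 m) (hf0 : ¬ f =ᵐ[m] 0) :
    ∃ R, ∀ T : E →L[ℝ] E, MeasurePreserving T m m → f ∘ T =ᵐ[m] f → ‖T‖ ≤ R := by
  have hmeas : AEMeasurable (fun v => ‖f v‖ₑ ^ 2) m := hf.aestronglyMeasurable.enorm.pow_const 2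
  have hfin : IsFiniteMeasure (m.withDensity fun v => ‖f v‖ₑ ^ 2) :=
    isFiniteMeasure_withDensity (by
      exact_mod_cast (lintegral_rpow_enorm_lt_top_of_eLpNorm_lt_top two_ne_zero
        ENNReal.ofNat_ne_top hf.eLpNorm_lt_top).ne)
  have hne : m.withDensity (fun v => ‖f v‖ₑ ^ 2) ≠ 0 := fun h0 => hf0 <| by
    filter_upwards [(withDensity_eq_zero_iff hmeas).1 h0] with v hv
    simpa using hv
  obtain ⟨R, hR⟩ := exists_forall_norm_le_of_measurePreserving _ hne fun u hu =>
    withDensity_absolutelyContinuous m _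
      (addHaar_setOf_inner_eq_zero m (norm_ne_zero_iff.1 (hu ▸ one_ne_zero)))
  refine ⟨R, fun T hT hfT => hR T (measurePreserving_withDensity hT hmeas ?_)⟩
  filter_upwards [hfT] with v hv
  rw [Function.comp_apply] at hv ⊢
  rw [hv]

end Furstenberg

/-! ### The linear action on the plane and its unit circle -/

instance : BorelSpace SL2 := ⟨rfl⟩

instance : IsTopologicalGroup SL2 := Matrix.SpecialLinearGroup.topologicalGroup

instance : T2Space SL2 := inferInstanceAs (T2Space {A : Matrix (Fin 2) (Fin 2) ℝ // A.det = 1})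

instance : SecondCountableTopology SL2 :=
  have : SecondCountableTopology (Matrix (Fin 2) (Fin 2) ℝ) :=
    inferInstanceAs (SecondCountableTopology (Fin 2 → Fin 2 → ℝ))
  TopologicalSpace.Subtype.secondCountableTopology {A : Matrix (Fin 2) (Fin 2) ℝ | A.det = 1}

/-- The Euclidean plane, on which `SL2` acts linearly. -/
abbrev Plane := EuclideanSpace ℝ (Fin 2)

theorem toEuclideanCLM_apply_eq_smul (g : SL2) (v : Plane) :
    Matrix.toEuclideanCLM (𝕜 := ℝ) (n := Fin 2) g.1 v = g • v := rfl

theorem smul_apply_eq (g : SL2) (v : Plane) (i : Fin 2) :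
    (g • v) i = g.1 i 0 * v 0 + g.1 i 1 * v 1 := by
  rw [← toEuclideanCLM_apply_eq_smul, Matrix.ofLp_toEuclideanCLM]
  simp [Matrix.mulVec, dotProduct]

instance : ContinuousSMul SL2 Plane where
  continuous_smul := by
    have hg : Continuous fun p : SL2 × Plane => p.1.1 := continuous_subtype_val.comp continuous_fst
    exact (PiLp.continuous_toLp 2 _).comp (hg.matrix_mulVec (by fun_prop))

instance : SMulInvariantMeasure SL2 Plane volume where
  measure_preimage_smul g s _ := by
    have hdet : LinearMap.det (Matrix.toLpLin 2 2 g.1) = 1 := by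
      rw [Matrix.toLpLin_eq_toLin, LinearMap.det_toLin, g.2]
    have h := Measure.addHaar_preimage_linearMap volume (hdet ▸ one_ne_zero) s
    rwa [hdet, inv_one, abs_one, ENNReal.ofReal_one, one_mul] at h

theorem norm_smul_le_opNorm_mul (g : SL2) (v : Plane) : ‖g • v‖ ≤ opNorm g * ‖v‖ :=
  (Matrix.toEuclideanCLM (𝕜 := ℝ) (n := Fin 2) g.1).le_opNorm v

theorem opNorm_mul_le (g h : SL2) : opNorm (g * h) ≤ opNorm g * opNorm h := by
  simpa only [opNorm, Matrix.SpecialLinearGroup.coe_mul, map_mul] using norm_mul_le _ _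

theorem continuous_opNorm : Continuous opNorm :=
  ((LinearMap.continuous_of_finiteDimensional
    (Matrix.toEuclideanCLM (𝕜 := ℝ) (n := Fin 2)).toAlgEquiv.toLinearMap).comp
      continuous_subtype_val).norm

/-- The signed area of the parallelogram spanned by two vectors of the plane. -/
def area (v w : Plane) : ℝ := v 0 * w 1 - v 1 * w 0

theorem area_smul_smul (g : SL2) (v w : Plane) : area (g • v) (g • w) = area v w := by
  have hdet := g.2
  rw [Matrix.det_fin_two] at hdet
  simp only [area, smul_apply_eq]
  linear_combination (v 0 * w 1 - v 1 * w 0) * hdet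

theorem norm_sq_eq_add (v : Plane) : ‖v‖ ^ 2 = v 0 ^ 2 + v 1 ^ 2 := by
  simp [EuclideanSpace.norm_sq_eq]

theorem abs_area_le (v w : Plane) : |area v w| ≤ ‖v‖ * ‖w‖ := by
  refine abs_le_of_sq_le_sq ?_ (by positivity)
  rw [mul_pow, norm_sq_eq_add, norm_sq_eq_add, area]
  nlinarith [sq_nonneg (v 0 * w 0 + v 1 * w 1)]

theorem norm_le_opNorm_mul_norm_smul (g : SL2) (v : Plane) : ‖v‖ ≤ opNorm g * ‖g • v‖ := by
  obtain rfl | hv := eq_or_ne v 0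
  · simp
  let w : Plane := !₂[-v 1, v 0]
  have hw : ‖w‖ = ‖v‖ := by
    rw [← sq_eq_sq₀ (norm_nonneg _) (norm_nonneg _), norm_sq_eq_add, norm_sq_eq_add]
    simp [w, add_comm]
  have harea : area v w = ‖v‖ ^ 2 := by
    rw [norm_sq_eq_add]
    simp [area, w]
    ring
  refine le_of_mul_le_mul_right ?_ (norm_pos_iff.2 hv)
  calc ‖v‖ * ‖v‖ = area (g • v) (g • w) := by rw [area_smul_smul, harea, sq]
    _ ≤ ‖g • v‖ * ‖g • w‖ := (le_abs_self _).trans (abs_area_le _ _)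
    _ ≤ ‖g • v‖ * (opNorm g * ‖v‖) := by
      gcongr
      exact hw ▸ norm_smul_le_opNorm_mul g w
    _ = opNorm g * ‖g • v‖ * ‖v‖ := by ring

theorem one_le_opNorm (g : SL2) : 1 ≤ opNorm g := by
  obtain ⟨v, hv⟩ := exists_norm_eq Plane zero_le_one
  have h := norm_le_opNorm_mul_norm_smul g v
  have h' := norm_smul_le_opNorm_mul g v
  rw [hv, mul_one] at h'
  have h0 : 0 ≤ opNorm g := norm_nonneg _
  nlinarith

theorem opNorm_pos (g : SL2) : 0 < opNorm g := zero_lt_one.trans_le (one_le_opNorm g)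

section SphereAction

variable {G E : Type*} [Group G] [NormedAddCommGroup E] [DistribMulAction G E]

theorem smul_coe_sphere_ne_zero (g : G) (v : Metric.sphere (0 : E) 1) : g • (v : E) ≠ 0 :=
  (smul_ne_zero_iff_ne g).2 (ne_zero_of_mem_unit_sphere v)

/-- The norm cocycle `log (‖g v‖ / ‖v‖)` of a linear action, on the unit sphere, where
`‖v‖ = 1`. -/
def normCocycle (g : G) (v : Metric.sphere (0 : E) 1) : ℝ := Real.log ‖g • (v : E)‖

theorem continuous_normCocycle [TopologicalSpace G] [ContinuousSMul G E] :
    Continuous fun p : G × Metric.sphere (0 : E) 1 => normCocycle p.1 p.2 := by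
  refine Continuous.log ?_ fun p => norm_ne_zero_iff.2 (smul_coe_sphere_ne_zero p.1 p.2)
  fun_prop

variable [NormedSpace ℝ E] [SMulCommClass G ℝ E]

/-- A linear action on a normed space induces an action on its unit sphere, by normalization. It is
not a global instance, because Mathlib has another one for `G` the unit sphere of a field. -/
@[reducible]
def sphereMulAction : MulAction G (Metric.sphere (0 : E) 1) where
  smul g v := ⟨‖g • (v : E)‖⁻¹ • g • (v : E), by
    rw [mem_sphere_zero_iff_norm]
    exact norm_smul_inv_norm (𝕜 := ℝ) (smul_coe_sphere_ne_zero g v)⟩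
  one_smul v := by
    ext1
    change ‖(1 : G) • (v : E)‖⁻¹ • (1 : G) • (v : E) = v
    rw [one_smul, norm_eq_of_mem_sphere, inv_one, one_smul]
  mul_smul g h v := by
    ext1
    change ‖(g * h) • (v : E)‖⁻¹ • (g * h) • (v : E) =
      ‖g • ‖h • (v : E)‖⁻¹ • h • (v : E)‖⁻¹ • g • ‖h • (v : E)‖⁻¹ • h • (v : E)
    have hv : ‖h • (v : E)‖ ≠ 0 := norm_ne_zero_iff.2 (smul_coe_sphere_ne_zero h v)
    rw [smul_comm g, ← mul_smul, norm_smul (_ : ℝ), norm_inv, norm_norm, smul_smul, mul_inv,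
      inv_inv, mul_right_comm, mul_inv_cancel₀ hv, one_mul]

attribute [local instance] sphereMulAction

theorem coe_sphere_smul (g : G) (v : Metric.sphere (0 : E) 1) :
    ((g • v : Metric.sphere (0 : E) 1) : E) = ‖g • (v : E)‖⁻¹ • g • (v : E) := rfl

theorem continuousSMul_sphere [TopologicalSpace G] [ContinuousSMul G E] :
    ContinuousSMul G (Metric.sphere (0 : E) 1) where
  continuous_smul := by
    refine Continuous.subtype_mk (Continuous.smul (Continuous.inv₀ ?_ ?_) ?_) _
    · fun_prop
    · exact fun p => norm_ne_zero_iff.2 (smul_coe_sphere_ne_zero p.1 p.2)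
    · fun_prop

theorem isAddCocycle_normCocycle :
    IsAddCocycle (normCocycle : G → Metric.sphere (0 : E) 1 → ℝ) := by
  intro g h v
  have hh := norm_ne_zero_iff.2 (smul_coe_sphere_ne_zero h v)
  have hgh := norm_ne_zero_iff.2 (smul_coe_sphere_ne_zero (g * h) v)
  rw [normCocycle, normCocycle, normCocycle, coe_sphere_smul, smul_comm g, ← mul_smul,
    norm_smul (_ : ℝ), norm_inv, norm_norm, Real.log_mul (inv_ne_zero hh) hgh, Real.log_inv]
  ring

end SphereAction

attribute [local instance] sphereMulAction continuousSMul_sphere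

theorem abs_normCocycle_le_kappa (g : SL2) (v : Metric.sphere (0 : Plane) 1) :
    |normCocycle g v| ≤ kappa g := by
  have hpos := norm_pos_iff.2 (smul_coe_sphere_ne_zero g v)
  have hle := norm_smul_le_opNorm_mul g v
  have hge := norm_le_opNorm_mul_norm_smul g v
  rw [norm_eq_of_mem_sphere] at hle hge
  rw [mul_one] at hle
  refine abs_le.2 ⟨?_, Real.log_le_log hpos hle⟩
  rw [normCocycle, kappa, ← Real.log_inv]
  exact Real.log_le_log (inv_pos.2 (opNorm_pos g))
    ((inv_le_iff_one_le_mul₀' (opNorm_pos g)).2 hge)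

theorem exists_cocycle_eq_normCocycle (x : PX) :
    ∃ v : Metric.sphere (0 : Plane) 1, ∀ g, cocycle g x = normCocycle g v := by
  have hw : (WithLp.toLp 2 x.rep : Plane) ≠ 0 := by simpa using x.rep_nonzero
  refine ⟨⟨_, mem_sphere_zero_iff_norm.2 (norm_smul_inv_norm (𝕜 := ℝ) hw)⟩, fun g => ?_⟩
  have hnorm (v : Fin 2 → ℝ) : enorm2 v = ‖(WithLp.toLp 2 v : Plane)‖ := by
    simp [enorm2, EuclideanSpace.norm_eq]
  rw [cocycle, normCocycle, hnorm, hnorm]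
  rw [smul_comm g, norm_smul (_ : ℝ), norm_inv, RCLike.norm_ofReal, abs_norm, div_eq_inv_mul]
  rfl

/-! ### Solvable subgroups of `SL₂` -/

section Solvability

theorem isSolvable_of_forall_mul_eq_smul_mul {G K R : Type*} [Group G] [Field K] [Ring R]
    [Algebra K R] {φ : G →* R} (hφ : Function.Injective φ) {N : R} (hN : N ≠ 0)
    (hcomm : ∀ a b : R, Commute a N → Commute b N → Commute a b)
    (h : ∀ g, ∃ c : K, φ g * N = c • (N * φ g)) : Group.IsSolvable G := by
  choose c hc using h
  have mul_ne_zero' (g : G) : N * φ g ≠ 0 := fun h0 => hN <| by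
    rw [← mul_one N, ← map_one φ, ← mul_inv_cancel g, map_mul, ← mul_assoc, h0, zero_mul]
  let χ : G →* K :=
    { toFun := c
      map_one' := smul_left_injective K hN <| by
        simpa only [map_one, one_mul, mul_one, one_smul] using (hc 1).symm
      map_mul' g h := smul_left_injective K (mul_ne_zero' (g * h)) <| by
        dsimp only
        rw [← hc, map_mul, mul_assoc, hc h, mul_smul_comm, ← mul_assoc, hc g, smul_mul_assoc,
          smul_smul, mul_comm (c h), mul_assoc] }
  have hker (g : χ.toHomUnits.ker) : Commute (φ g) N := by
    have : c g = 1 := congrArg Units.val g.2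
    rw [Commute, SemiconjBy, hc, this, one_smul]
  have : Group.IsSolvable χ.toHomUnits.ker := Group.isSolvable_of_comm fun a b => by
    refine Subtype.ext (hφ ?_)
    simpa only [Subgroup.coe_mul, map_mul] using (hcomm _ _ (hker a) (hker b)).eq
  exact Group.isSolvable_of_ker_le_range χ.toHomUnits.ker.subtype χ.toHomUnits (by simp)

/-- Coordinates of the class of a `2 × 2` matrix modulo scalar matrices, arranged so that the
commutator becomes the cross product. -/
def modScalarCoords {R : Type*} [Ring R] (A : Matrix (Fin 2) (Fin 2) R) : Fin 3 → R :=
  ![A 0 1, A 1 0, A 0 0 - A 1 1]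

open Matrix in
theorem mul_sub_mul_eq_crossProduct {R : Type*} [CommRing R] (A B : Matrix (Fin 2) (Fin 2) R) :
    A * B - B * A =
      let w := modScalarCoords A ⨯₃ modScalarCoords B
      !![w 2, w 1; w 0, -w 2] := by
  ext i j
  fin_cases i <;> fin_cases j <;>
    simp [Matrix.mul_apply, Fin.sum_univ_two, cross_apply, modScalarCoords] <;> ring

open Matrix in
theorem commute_iff_crossProduct_eq_zero {R : Type*} [CommRing R]
    {A B : Matrix (Fin 2) (Fin 2) R} :
    Commute A B ↔ modScalarCoords A ⨯₃ modScalarCoords B = 0 := by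
  rw [Commute, SemiconjBy, ← sub_eq_zero, mul_sub_mul_eq_crossProduct]
  constructor
  · intro h
    ext i
    fin_cases i
    · exact congr_fun₂ h 1 0
    · exact congr_fun₂ h 0 1
    · exact congr_fun₂ h 0 0
  · intro h
    ext i j
    fin_cases i <;> fin_cases j <;> simp [h]

open Matrix in
theorem commute_of_commute_of_modScalarCoords_ne_zero {K : Type*} [Field K]
    {N A B : Matrix (Fin 2) (Fin 2) K} (hN : modScalarCoords N ≠ 0) (hA : Commute A N)
    (hB : Commute B N) : Commute A B := by
  have exists_smul {C : Matrix (Fin 2) (Fin 2) K} (hC : Commute C N) :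
      ∃ c : K, c • modScalarCoords N = modScalarCoords C := by
    by_contra! h
    refine crossProduct_ne_zero_iff_linearIndependent.2
      ((LinearIndependent.pair_iff' hN).2 h) (commute_iff_crossProduct_eq_zero.1 hC.symm)
  obtain ⟨a, ha⟩ := exists_smul hA
  obtain ⟨b, hb⟩ := exists_smul hB
  rw [commute_iff_crossProduct_eq_zero, ← ha, ← hb, map_smul, map_smul, LinearMap.smul_apply,
    cross_self, smul_zero, smul_zero]

open Matrix in
theorem transpose_mul_mul_eq_det_smul {R : Type*} [CommRing R] (A : Matrix (Fin 2) (Fin 2) R) :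
    Aᵀ * !![0, 1; -1, 0] * A = A.det • !![0, 1; -1, 0] := by
  ext i j
  fin_cases i <;> fin_cases j <;>
    simp [Matrix.mul_apply, Fin.sum_univ_two, det_fin_two] <;> ring

open Matrix in
theorem modScalarCoords_symm_mul_ne_zero {K : Type*} [Field K] [NeZero (2 : K)]
    {M : Matrix (Fin 2) (Fin 2) K} (hM : M.IsSymm) (hM0 : M ≠ 0) :
    modScalarCoords (M * !![0, 1; -1, 0]) ≠ 0 := by
  intro h
  have h01 : M 0 1 = M 1 0 := hM.apply 1 0
  have hcoords : modScalarCoords (M * !![0, 1; -1, 0]) = ![M 0 0, -M 1 1, -(2 * M 0 1)] := by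
    simp [modScalarCoords, Matrix.mul_apply, Fin.sum_univ_two, ← h01]
    ring
  rw [hcoords] at h
  have h00 : M 0 0 = 0 := congr_fun h 0
  have h11 : M 1 1 = 0 := neg_eq_zero.1 (congr_fun h 1)
  have h10 : M 0 1 = 0 :=
    (mul_eq_zero.1 (neg_eq_zero.1 (congr_fun h 2))).resolve_left two_ne_zero
  refine hM0 (Matrix.ext fun i j => ?_)
  fin_cases i <;> fin_cases j <;> simp [h00, h11, h10, ← h01]

open Matrix in
theorem isSolvable_of_forall_mul_mul_transpose_eq_smul {K : Type*} [Field K] [NeZero (2 : K)]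
    (Γ : Subgroup (SpecialLinearGroup (Fin 2) K)) {M : Matrix (Fin 2) (Fin 2) K} (hM : M.IsSymm)
    (hM0 : M ≠ 0) (h : ∀ g ∈ Γ, ∃ c : K, g.1 * M * g.1ᵀ = c • M) : Group.IsSolvable Γ := by
  let J : Matrix (Fin 2) (Fin 2) K := !![0, 1; -1, 0]
  have hMJ : modScalarCoords (M * J) ≠ 0 := modScalarCoords_symm_mul_ne_zero hM hM0
  refine isSolvable_of_forall_mul_eq_smul_mul (K := K) (N := M * J)
    (φ := SpecialLinearGroup.coeMonoidHom.comp Γ.subtype)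
    (Subtype.val_injective.comp Γ.subtype_injective)
    (fun h0 => hMJ (by rw [h0]; ext i; fin_cases i <;> simp [modScalarCoords]))
    (fun a b => commute_of_commute_of_modScalarCoords_ne_zero hMJ) fun g => ?_
  obtain ⟨c, hc⟩ := h g g.2
  have hJ : g.1.1ᵀ * J * g.1.1 = J := by rw [transpose_mul_mul_eq_det_smul, g.1.2, one_smul]
  refine ⟨c, ?_⟩
  calc g.1.1 * (M * J) = g.1.1 * M * (g.1.1ᵀ * J * g.1.1) := by rw [hJ, Matrix.mul_assoc]
    _ = g.1.1 * M * g.1.1ᵀ * J * g.1.1 := by simp only [Matrix.mul_assoc]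
    _ = c • (M * J * g.1.1) := by rw [hc, Matrix.smul_mul, Matrix.smul_mul]

end Solvability

section PlaneSolvability

open scoped RealInnerProductSpace ComplexOrder Matrix

theorem covarianceOperator_conj_of_measurePreserving {E : Type*} [NormedAddCommGroup E]
    [InnerProductSpace ℝ E] [CompleteSpace E] [MeasurableSpace E] [BorelSpace E] {m : Measure E}
    (hm : MemLp id 2 m) {T : E →L[ℝ] E} (hT : MeasurePreserving T m m) :
    T ∘L ProbabilityTheory.covarianceOperator m ∘L T.adjoint =
      ProbabilityTheory.covarianceOperator m := by
  ext x
  refine ext_inner_right ℝ fun y => ?_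
  simp only [ContinuousLinearMap.comp_apply]
  rw [← ContinuousLinearMap.adjoint_inner_right, ProbabilityTheory.covarianceOperator_inner hm,
    ProbabilityTheory.covarianceOperator_inner hm]
  simp only [ContinuousLinearMap.adjoint_inner_left]
  have hmeas : AEStronglyMeasurable (fun z => ⟪x, z⟫ * ⟪y, z⟫) (m.map T) := by
    rw [hT.map_eq]
    exact ((hm.const_inner x).1.mul (hm.const_inner y).1)
  rw [← integral_map hT.aemeasurable hmeas, hT.map_eq]

theorem covarianceOperator_ne_zero {E : Type*} [NormedAddCommGroup E]
    [InnerProductSpace ℝ E] [CompleteSpace E] [MeasurableSpace E] [BorelSpace E] {m : Measure E}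
    (hm : MemLp id 2 m) {x : E} (hx : ¬ ∀ᵐ z ∂m, ⟪x, z⟫ = 0) :
    ProbabilityTheory.covarianceOperator m ≠ 0 := by
  refine fun h0 => hx ?_
  have hint : ∫ z, ⟪x, z⟫ ^ 2 ∂m = 0 := by
    simpa only [h0, sq, zero_apply, inner_zero_left] using
      (ProbabilityTheory.covarianceOperator_inner hm x x).symm
  have hsq := (integral_eq_zero_iff_of_nonneg (fun z => sq_nonneg ⟪x, z⟫)
    (hm.const_inner x).integrable_sq).1 hint
  filter_upwards [hsq] with z hz using (pow_eq_zero_iff two_ne_zero).1 hz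

theorem isSolvable_of_forall_conj_eq (Γ : Subgroup SL2) {P : Plane →L[ℝ] Plane}
    (hP : IsSelfAdjoint P) (hP0 : P ≠ 0)
    (h : ∀ g ∈ Γ, Matrix.toEuclideanCLM (𝕜 := ℝ) g.1 ∘L P ∘L
      ContinuousLinearMap.adjoint (Matrix.toEuclideanCLM (𝕜 := ℝ) g.1) = P) :
    Group.IsSolvable Γ := by
  let e := Matrix.toEuclideanCLM (𝕜 := ℝ) (n := Fin 2)
  have map_transpose (A : Matrix (Fin 2) (Fin 2) ℝ) :
      e Aᵀ = ContinuousLinearMap.adjoint (e A) := by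
    rw [← Matrix.conjTranspose_eq_transpose_of_trivial]
    exact map_star e A
  obtain ⟨M, rfl⟩ := EquivLike.surjective e P
  refine isSolvable_of_forall_mul_mul_transpose_eq_smul Γ (M := M) (EquivLike.injective e ?_) ?_
    fun g hg => ⟨1, EquivLike.injective e ?_⟩
  · rw [map_transpose]
    exact hP
  · rintro rfl
    exact hP0 (map_zero e)
  · calc e (g.1 * M * g.1ᵀ) = e g.1 * e M * e g.1ᵀ := by rw [map_mul e, map_mul e]
      _ = e M := by rw [map_transpose, mul_assoc]; exact h g hg
      _ = e ((1 : ℝ) • M) := by rw [one_smul]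

theorem isSolvable_of_forall_measurePreserving (Γ : Subgroup SL2) {m : Measure Plane}
    (hm : MemLp id 2 m) {u : Plane} (hu : ¬ ∀ᵐ v ∂m, ⟪u, v⟫ = 0)
    (h : ∀ g ∈ Γ, MeasurePreserving (g • · : Plane → Plane) m m) : Group.IsSolvable Γ :=
  isSolvable_of_forall_conj_eq Γ
    (LinearMap.IsSymmetric.isSelfAdjoint
      ProbabilityTheory.isPositive_covarianceOperator.isSymmetric)
    (covarianceOperator_ne_zero hm hu)
    fun g hg => covarianceOperator_conj_of_measurePreserving hm (h g hg)

theorem isSolvable_of_forall_preimage_smul_eq (Γ : Subgroup SL2) {A : Set Plane}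
    (hA : MeasurableSet A) (hbdd : Bornology.IsBounded A) (hA0 : volume A ≠ 0)
    (h : ∀ g ∈ Γ, (g • ·) ⁻¹' A = A) : Group.IsSolvable Γ := by
  let m : Measure Plane := volume.restrict A
  obtain ⟨r, hr⟩ := hbdd.exists_norm_le
  have : IsFiniteMeasure m := isFiniteMeasure_restrict.2 hbdd.measure_lt_top.ne
  have hm : MemLp id 2 m := MemLp.of_bound aestronglyMeasurable_id r
    ((ae_restrict_iff' hA).2 (Eventually.of_forall hr))
  refine isSolvable_of_forall_measurePreserving Γ hm (u := EuclideanSpace.single 0 1)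
    (fun hline => hA0 ?_) fun g hg => ?_
  · have hnull : ∀ᵐ v : Plane, ⟪EuclideanSpace.single 0 (1 : ℝ), v⟫ ≠ 0 :=
      measure_eq_zero_iff_ae_notMem.1 (addHaar_setOf_inner_eq_zero volume (by simp))
    refine measure_eq_zero_iff_ae_notMem.2 ?_
    filter_upwards [hnull, (ae_restrict_iff' hA).1 hline] with v hv hline hvA
      using hv (hline hvA)
  · have hrestrict := (measurePreserving_smul g (volume : Measure Plane)).restrict_preimage hA
    rwa [h g hg] at hrestrict

theorem isSolvable_of_forall_opNorm_le (Γ : Subgroup SL2) {R : ℝ} (hR : ∀ g ∈ Γ, opNorm g ≤ R) :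
    Group.IsSolvable Γ := by
  have hR0 : 0 < R := (opNorm_pos 1).trans_le (hR 1 Γ.one_mem)
  -- The unit ball of the `Γ`-invariant norm `sup_{g ∈ Γ} ‖g v‖`.
  let A : Set Plane := {v | ∀ g ∈ Γ, ‖g • v‖ ≤ 1}
  have hA : MeasurableSet A := by
    have : A = ⋂ g ∈ Γ, {v | ‖g • v‖ ≤ 1} := by ext v; simp [A]
    rw [this]
    exact (isClosed_biInter fun g _ => isClosed_le (by fun_prop) continuous_const).measurableSet
  have bounded : Bornology.IsBounded A := Metric.isBounded_closedBall.subset fun v hv =>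
    mem_closedBall_zero_iff.2 (by simpa using hv 1 Γ.one_mem : ‖v‖ ≤ 1)
  have ball_subset : Metric.closedBall 0 R⁻¹ ⊆ A := fun v hv g hg => by
    rw [mem_closedBall_zero_iff] at hv
    calc ‖g • v‖ ≤ opNorm g * ‖v‖ := norm_smul_le_opNorm_mul g v
      _ ≤ R * R⁻¹ := by gcongr; exact hR g hg
      _ = 1 := mul_inv_cancel₀ hR0.ne'
  refine isSolvable_of_forall_preimage_smul_eq Γ hA bounded (((Metric.measure_closedBall_pos
    volume (0 : Plane) (inv_pos.2 hR0)).trans_le (measure_mono ball_subset)).ne') fun g hg => ?_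
  refine subset_antisymm (fun v hv k hk => ?_) fun v hv k hk => ?_
  · simpa [mul_smul] using hv (k * g⁻¹) (Γ.mul_mem hk (Γ.inv_mem hg))
  · simpa [mul_smul] using hv (k * g) (Γ.mul_mem hk hg)

theorem exists_eq_smul_of_area_eq_zero {u v : Plane} (hu : u ≠ 0) (h : area u v = 0) :
    ∃ a : ℝ, v = a • u := by
  refine ⟨(v 0 * u 0 + v 1 * u 1) / (u 0 ^ 2 + u 1 ^ 2), ?_⟩
  have hu' : u 0 ^ 2 + u 1 ^ 2 ≠ 0 := by
    rw [← norm_sq_eq_add]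
    exact pow_ne_zero 2 (norm_ne_zero_iff.2 hu)
  rw [area] at h
  ext i
  fin_cases i <;> simp <;> field_simp
  · linear_combination -u 1 * h
  · linear_combination u 0 * h

theorem isSolvable_of_forall_smul_pair (Γ : Subgroup SL2) {u w : Plane} (hu : u ≠ 0) (hw : w ≠ 0)
    (h : ∀ g ∈ Γ, ∃ a b : ℝ, (g • u = a • u ∧ g • w = b • w) ∨ (g • u = a • w ∧ g • w = b • u)) :
    Group.IsSolvable Γ := by
  let M (u w : Plane) : Matrix (Fin 2) (Fin 2) ℝ := Matrix.vecMulVec u w + Matrix.vecMulVec w u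
  have conj_eq (g : SL2) : g.1 * M u w * g.1ᵀ = M (g • u) (g • w) := by
    simp only [M, Matrix.mul_add, Matrix.add_mul, Matrix.mul_vecMulVec, Matrix.vecMulVec_mul,
      Matrix.vecMul_transpose]
    rfl
  have smul_smul_eq (a b : ℝ) (u w : Plane) : M (a • u) (b • w) = (a * b) • M u w := by
    ext i j
    simp [M, Matrix.vecMulVec_apply]
    ring
  have swap_eq : M w u = M u w := add_comm _ _
  have ne_zero : M u w ≠ 0 := fun h0 => by
    have h00 : u 0 * w 0 + w 0 * u 0 = 0 := congr_fun₂ h0 0 0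
    have h01 : u 0 * w 1 + w 0 * u 1 = 0 := congr_fun₂ h0 0 1
    have h11 : u 1 * w 1 + w 1 * u 1 = 0 := congr_fun₂ h0 1 1
    have : ‖u‖ ^ 2 * ‖w‖ ^ 2 = 0 := by
      rw [norm_sq_eq_add, norm_sq_eq_add]
      linear_combination (u 0 * w 0 / 2 - u 1 * w 1) * h00 + (u 0 * w 1 + w 0 * u 1) * h01 +
        u 1 * w 1 / 2 * h11
    simp [hu, hw] at this
  refine isSolvable_of_forall_mul_mul_transpose_eq_smul Γ (M := M u w) ?_ ne_zero fun g hg => ?_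
  · simp [M, Matrix.IsSymm, Matrix.transpose_vecMulVec, add_comm]
  · obtain ⟨a, b, ⟨hgu, hgw⟩ | ⟨hgu, hgw⟩⟩ := h g hg
    · exact ⟨a * b, by rw [conj_eq, hgu, hgw, smul_smul_eq]⟩
    · exact ⟨a * b, by rw [conj_eq, hgu, hgw, smul_smul_eq, swap_eq]⟩

theorem eq_one_of_smul_eq {g : SL2} {u v : Plane} (huv : area u v ≠ 0) (hu : g • u = u)
    (hv : g • v = v) : g = 1 := by
  have hu' (i : Fin 2) : g.1 i 0 * u 0 + g.1 i 1 * u 1 = u i := by rw [← smul_apply_eq, hu]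
  have hv' (i : Fin 2) : g.1 i 0 * v 0 + g.1 i 1 * v 1 = v i := by rw [← smul_apply_eq, hv]
  rw [area] at huv
  ext i j
  refine mul_left_cancel₀ huv ?_
  fin_cases i <;> fin_cases j <;> simp [-mul_eq_zero]
  · linear_combination v 1 * hu' 0 - u 1 * hv' 0
  · linear_combination u 0 * hv' 0 - v 0 * hu' 0
  · linear_combination v 1 * hu' 1 - u 1 * hv' 1
  · linear_combination u 0 * hv' 1 - v 0 * hu' 1

theorem smul_coe_eq_norm_smul (g : SL2) (u : Metric.sphere (0 : Plane) 1) :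
    g • (u : Plane) = ‖g • (u : Plane)‖ • ((g • u : Metric.sphere (0 : Plane) 1) : Plane) := by
  rw [coe_sphere_smul, smul_inv_smul₀ (norm_ne_zero_iff.2 (smul_coe_sphere_ne_zero g u))]

theorem norm_mul_norm_mul_area_eq (g : SL2) (u v : Metric.sphere (0 : Plane) 1) :
    ‖g • (u : Plane)‖ * ‖g • (v : Plane)‖ *
      area (g • u : Metric.sphere (0 : Plane) 1) (g • v : Metric.sphere (0 : Plane) 1) =
      area u v := by
  conv_rhs => rw [← area_smul_smul g, smul_coe_eq_norm_smul g u, smul_coe_eq_norm_smul g v]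
  simp only [area, PiLp.smul_apply, smul_eq_mul]
  ring

theorem eq_one_of_smul_sphere_eq {g : SL2} {u v w : Metric.sphere (0 : Plane) 1}
    (huv : area u v ≠ 0) (huw : area u w ≠ 0) (hvw : area v w ≠ 0) (hu : g • u = u)
    (hv : g • v = v) (hw : g • w = w) : g = 1 := by
  have norm_mul_norm_eq_one {x y : Metric.sphere (0 : Plane) 1} (hxy : area x y ≠ 0)
      (hx : g • x = x) (hy : g • y = y) : ‖g • (x : Plane)‖ * ‖g • (y : Plane)‖ = 1 := by
    have h := norm_mul_norm_mul_area_eq g x y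
    rw [hx, hy] at h
    exact mul_right_cancel₀ hxy (h.trans (one_mul _).symm)
  have hab := norm_mul_norm_eq_one huv hu hv
  have hac := norm_mul_norm_eq_one huw hu hw
  have hbc := norm_mul_norm_eq_one hvw hv hw
  have ha : ‖g • (u : Plane)‖ = 1 := by
    refine (pow_eq_one_iff_of_nonneg (norm_nonneg _) two_ne_zero).1 ?_
    linear_combination ‖g • (u : Plane)‖ * ‖g • (w : Plane)‖ * hab + hac -
      ‖g • (u : Plane)‖ ^ 2 * hbc
  have hb : ‖g • (v : Plane)‖ = 1 := by rwa [ha, one_mul] at hab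
  refine eq_one_of_smul_eq huv ?_ ?_
  · rw [smul_coe_eq_norm_smul, ha, one_smul, hu]
  · rw [smul_coe_eq_norm_smul, hb, one_smul, hv]

theorem exists_smul_coe_eq_smul {g : SL2} {u v : Metric.sphere (0 : Plane) 1}
    (h : area v (g • u : Metric.sphere (0 : Plane) 1) = 0) :
    ∃ a : ℝ, g • (u : Plane) = a • (v : Plane) := by
  obtain ⟨a, ha⟩ := exists_eq_smul_of_area_eq_zero (ne_zero_of_mem_unit_sphere v) h
  exact ⟨‖g • (u : Plane)‖ * a, by rw [mul_smul, ← ha, ← smul_coe_eq_norm_smul]⟩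

section Stabilizer

open scoped Pointwise

variable {F : Set (Metric.sphere (0 : Plane) 1)}

theorem isSolvable_stabilizer_of_three_lines (hF : F.Finite) {u v w : Metric.sphere (0 : Plane) 1}
    (hu : u ∈ F) (hv : v ∈ F) (hw : w ∈ F) (huv : area u v ≠ 0) (huw : area u w ≠ 0)
    (hvw : area v w ≠ 0) : Group.IsSolvable (MulAction.stabilizer SL2 F) := by
  have mem_F {g : SL2} (hg : g ∈ MulAction.stabilizer SL2 F) {x} (hx : x ∈ F) : g • x ∈ F :=
    (MulAction.mem_stabilizer_set.1 hg x).2 hx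
  have finite : (MulAction.stabilizer SL2 F : Set SL2).Finite := by
    refine Set.Finite.of_finite_image (f := fun g => (g • u, g • v, g • w))
      ((hF.prod (hF.prod hF)).subset ?_) fun g _ h _ hgh => ?_
    · rintro _ ⟨g, hg, rfl⟩
      exact ⟨mem_F hg hu, mem_F hg hv, mem_F hg hw⟩
    · simp only [Prod.mk.injEq, ← inv_smul_eq_iff (g := h), smul_smul] at hgh
      obtain ⟨hgu, hgv, hgw⟩ := hgh
      exact (inv_mul_eq_one.1 (eq_one_of_smul_sphere_eq huv huw hvw hgu hgv hgw)).symm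
  obtain ⟨R, hR⟩ := (finite.image opNorm).bddAbove
  exact isSolvable_of_forall_opNorm_le _ fun g hg => hR (Set.mem_image_of_mem opNorm hg)

theorem isSolvable_stabilizer_of_two_lines {u w : Metric.sphere (0 : Plane) 1}
    (hu : u ∈ F) (hw : w ∈ F) (huw : area u w ≠ 0) (h : ∀ x ∈ F, area u x = 0 ∨ area w x = 0) :
    Group.IsSolvable (MulAction.stabilizer SL2 F) := by
  refine isSolvable_of_forall_smul_pair _ (ne_zero_of_mem_unit_sphere u)
    (ne_zero_of_mem_unit_sphere w) fun g hg => ?_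
  have smul_eq {x} (hx : x ∈ F) :
      ∃ a : ℝ, g • (x : Plane) = a • (u : Plane) ∨ g • (x : Plane) = a • (w : Plane) := by
    obtain hx' | hx' := h _ ((MulAction.mem_stabilizer_set.1 hg x).2 hx)
    · exact (exists_smul_coe_eq_smul hx').imp fun _ => Or.inl
    · exact (exists_smul_coe_eq_smul hx').imp fun _ => Or.inr
  have not_both_parallel (a b : ℝ) (z : Plane) (hgu : g • (u : Plane) = a • z)
      (hgw : g • (w : Plane) = b • z) : False := huw <| by
    rw [← area_smul_smul g, hgu, hgw]
    simp [area]
    ring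
  obtain ⟨a, hgu | hgu⟩ := smul_eq hu <;> obtain ⟨b, hgw | hgw⟩ := smul_eq hw
  · exact (not_both_parallel _ _ _ hgu hgw).elim
  · exact ⟨a, b, Or.inl ⟨hgu, hgw⟩⟩
  · exact ⟨a, b, Or.inr ⟨hgu, hgw⟩⟩
  · exact (not_both_parallel _ _ _ hgu hgw).elim

theorem isSolvable_stabilizer_of_one_line {u : Metric.sphere (0 : Plane) 1} (hu : u ∈ F)
    (h : ∀ x ∈ F, area u x = 0) : Group.IsSolvable (MulAction.stabilizer SL2 F) := by
  refine isSolvable_of_forall_smul_pair _ (ne_zero_of_mem_unit_sphere u)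
    (ne_zero_of_mem_unit_sphere u) fun g hg => ?_
  obtain ⟨a, ha⟩ := exists_smul_coe_eq_smul (h _ ((MulAction.mem_stabilizer_set.1 hg u).2 hu))
  exact ⟨a, a, Or.inl ⟨ha, ha⟩⟩

theorem isSolvable_stabilizer_of_finite (hF : F.Finite) (hF' : F.Nonempty) :
    Group.IsSolvable (MulAction.stabilizer SL2 F) := by
  obtain ⟨u, hu⟩ := hF'
  by_cases h₁ : ∀ x ∈ F, area u x = 0
  · exact isSolvable_stabilizer_of_one_line hu h₁
  push Not at h₁
  obtain ⟨w, hw, huw⟩ := h₁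
  by_cases h₂ : ∀ x ∈ F, area u x = 0 ∨ area w x = 0
  · exact isSolvable_stabilizer_of_two_lines hu hw huw h₂
  push Not at h₂
  obtain ⟨z, hz, huz, hwz⟩ := h₂
  exact isSolvable_stabilizer_of_three_lines hF hu hw hz huw huz hwz

end Stabilizer

end PlaneSolvability

/-! ### Drift of the norm cocycle -/

section Support

variable {μ : Measure SL2}

theorem closure_measSupp_le {H : Subgroup SL2} (hH : IsClosed (H : Set SL2))
    (h : ∀ᵐ g ∂μ, g ∈ H) : Subgroup.closure (measSupp μ) ≤ H := by
  refine (Subgroup.closure_le H).2 fun g hg => ?_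
  by_contra hgH
  exact (hg _ hH.isOpen_compl hgH).ne' h

theorem ZariskiDense.not_isSolvable_of_ae_mem (hzd : ZariskiDense μ) {H : Subgroup SL2}
    (hH : IsClosed (H : Set SL2)) (h : ∀ᵐ g ∂μ, g ∈ H) : ¬ Group.IsSolvable H := fun _ =>
  hzd <| Group.isSolvable_of_isSolvable_injective
    (Subgroup.inclusion_injective (closure_measSupp_le hH h))

end Support

theorem ZariskiDense.eq_zero_of_ae_mk_smul_eq {μ : Measure SL2} (hzd : ZariskiDense μ)
    {f : Lp ℝ 2 (volume : Measure Plane)} (hf : ∀ᵐ g ∂μ, DomMulAct.mk g • f = f) : f = 0 := by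
  by_contra hf0
  let H : Subgroup SL2 :=
    { carrier := {g | DomMulAct.mk g • f = f}
      one_mem' := by simp
      mul_mem' := fun {g h} hg hh => by
        rw [Set.mem_ofPred_eq] at hg hh ⊢
        rw [DomMulAct.mk_mul, mul_smul, hg, hh]
      inv_mem' := fun {g} hg => by
        rw [Set.mem_ofPred_eq] at hg ⊢
        rw [DomMulAct.mk_inv, inv_smul_eq_iff, hg] }
  have hH : IsClosed (H : Set SL2) :=
    isClosed_eq (continuous_mk_smul_Lp volume f) continuous_const
  obtain ⟨R, hR⟩ := exists_forall_norm_le_of_comp_ae_eq (Lp.memLp f)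
    fun h => hf0 ((Lp.eq_zero_iff_ae_eq_zero).2 h)
  refine hzd.not_isSolvable_of_ae_mem hH hf (isSolvable_of_forall_opNorm_le H fun g hg =>
    hR (Matrix.toEuclideanCLM (𝕜 := ℝ) (n := Fin 2) g.1) (measurePreserving_smul g volume) ?_)
  have h := DomMulAct.smul_Lp_ae_eq (DomMulAct.mk g) f
  rw [show DomMulAct.mk g • f = f from hg] at h
  exact h.symm

theorem inv_sq_opNorm_mul_measureReal_closedBall_le (g : SL2) :
    (opNorm g ^ 2)⁻¹ * volume.real (Metric.closedBall (0 : Plane) 1) ≤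
      volume.real (Metric.closedBall (0 : Plane) 1 ∩ (g • ·) ⁻¹' Metric.closedBall 0 1) := by
  have hg := one_le_opNorm g
  have hsub : Metric.closedBall (0 : Plane) (opNorm g)⁻¹ ⊆
      Metric.closedBall 0 1 ∩ (g • ·) ⁻¹' Metric.closedBall 0 1 := by
    intro v hv
    rw [mem_closedBall_zero_iff] at hv
    refine ⟨mem_closedBall_zero_iff.2 (hv.trans (inv_le_one_of_one_le₀ hg)),
      mem_closedBall_zero_iff.2 ?_⟩
    calc ‖g • v‖ ≤ opNorm g * ‖v‖ := norm_smul_le_opNorm_mul g v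
      _ ≤ opNorm g * (opNorm g)⁻¹ := by gcongr
      _ = 1 := mul_inv_cancel₀ (by positivity)
  calc (opNorm g ^ 2)⁻¹ * volume.real (Metric.closedBall (0 : Plane) 1)
      = volume.real (Metric.closedBall (0 : Plane) (opNorm g)⁻¹) := by
        rw [Measure.addHaar_real_closedBall' volume (0 : Plane) (r := (opNorm g)⁻¹) (by positivity),
          finrank_euclideanSpace_fin, inv_pow]
    _ ≤ _ := measureReal_mono hsub
      (measure_ne_top_of_subset Set.inter_subset_left measure_closedBall_lt_top.ne)

theorem exists_integral_inv_sq_opNorm_lt (μ : Measure SL2) [IsProbabilityMeasure μ]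
    (hzd : ZariskiDense μ) {η : ℝ} (hη : 0 < η) :
    ∃ n, ∫ g, (opNorm g ^ 2)⁻¹ ∂convPow μ n < η := by
  let A := Metric.closedBall (0 : Plane) 1
  have hA : volume A ≠ ⊤ := measure_closedBall_lt_top.ne
  have hA_meas : MeasurableSet A := Metric.isClosed_closedBall.measurableSet
  have hA_pos : 0 < volume.real A :=
    ENNReal.toReal_pos (Metric.measure_closedBall_pos volume 0 one_pos).ne' hA
  obtain ⟨n, hn⟩ := exists_integral_measureReal_inter_preimage_smul_lt volume μ
    (fun f => hzd.eq_zero_of_ae_mk_smul_eq) hA_meas hA (mul_pos hη hA_pos)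
  refine ⟨n, lt_of_mul_lt_mul_right (lt_of_le_of_lt ?_ hn) hA_pos.le⟩
  rw [← integral_mul_const]
  refine integral_mono_of_nonneg (Eventually.of_forall fun g => by positivity)
    (integrable_measureReal_inter_preimage_smul volume _ hA_meas hA)
    (Eventually.of_forall inv_sq_opNorm_mul_measureReal_closedBall_le)

theorem kappa_nonneg (g : SL2) : 0 ≤ kappa g := Real.log_nonneg (one_le_opNorm g)

theorem continuous_kappa : Continuous kappa :=
  continuous_opNorm.log fun g => (opNorm_pos g).ne'

theorem exists_integrable_exp_mul_kappa {μ : Measure SL2} [IsProbabilityMeasure μ]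
    (hmom : HasExpMoment μ) :
    ∃ δ > 0, ∀ n, Integrable (fun g => Real.exp (δ * kappa g)) (convPow μ n) := by
  obtain ⟨δ, hδ, h⟩ := hmom
  have hcont : Continuous fun g : SL2 => opNorm g ^ δ :=
    continuous_opNorm.rpow_const fun g => Or.inl (opNorm_pos g).ne'
  have opNorm_rpow_mul_le (g h : SL2) : ENNReal.ofReal (opNorm (g * h) ^ δ) ≤
      ENNReal.ofReal (opNorm g ^ δ) * ENNReal.ofReal (opNorm h ^ δ) := by
    have hg := opNorm_pos g
    rw [← ENNReal.ofReal_mul (by positivity), ← Real.mul_rpow hg.le (opNorm_pos h).le]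
    exact ENNReal.ofReal_le_ofReal
      (Real.rpow_le_rpow (opNorm_pos _).le (opNorm_mul_le g h) hδ.le)
  refine ⟨δ, hδ, fun n => ?_⟩
  have hfinite := lintegral_convPow_lt_top_of_submultiplicative μ
    hcont.measurable.ennreal_ofReal ENNReal.ofReal_lt_top opNorm_rpow_mul_le h n
  simp only [mul_comm δ, kappa, ← Real.rpow_def_of_pos (opNorm_pos _)]
  exact ⟨hcont.aestronglyMeasurable,
    (hasFiniteIntegral_iff_ofReal (Eventually.of_forall fun g => by positivity [opNorm_pos g])).2
      hfinite⟩

section SphereMeasures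

open scoped RealInnerProductSpace

variable {ν : Measure (Metric.sphere (0 : Plane) 1)} [IsProbabilityMeasure ν]

theorem IsStationaryMeasure.measure_singleton_eq_zero {μ : Measure SL2} [IsProbabilityMeasure μ]
    (hν : IsStationaryMeasure μ ν) (hzd : ZariskiDense μ) (v : Metric.sphere (0 : Plane) 1) :
    ν {v} = 0 := by
  by_contra hv
  obtain ⟨F, hF, hF', hmem⟩ := hν.exists_finite_ae_mem_stabilizer hv
  exact hzd.not_isSolvable_of_ae_mem (isClosed_stabilizer_of_finite hF) hmem
    (isSolvable_stabilizer_of_finite hF hF')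

theorem finite_setOf_inner_coe_sphere_eq_zero {u : Plane} (hu : ‖u‖ = 1) :
    {v : Metric.sphere (0 : Plane) 1 | ⟪u, (v : Plane)⟫ = 0}.Finite := by
  let w : Plane := !₂[u 1, -u 0]
  have hw : ‖w‖ = 1 := by
    rw [← sq_eq_sq₀ (norm_nonneg _) zero_le_one, ← hu, norm_sq_eq_add, norm_sq_eq_add]
    simp [w, add_comm]
  refine (((Set.finite_singleton (-w)).insert w).preimage
    Subtype.val_injective.injOn).subset fun v hv => ?_
  have harea : area w v = 0 := by
    rw [← show ⟪u, (v : Plane)⟫ = 0 from hv]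
    simp [area, w, PiLp.inner_apply]
    ring
  have hw0 : w ≠ 0 := ne_zero_of_norm_ne_zero (hw ▸ one_ne_zero)
  obtain ⟨a, ha⟩ := exists_eq_smul_of_area_eq_zero hw0 harea
  have ha_abs : |a| = 1 := by
    simpa [ha, norm_smul, hw] using norm_eq_of_mem_sphere v
  rcases eq_or_eq_neg_of_abs_eq ha_abs with rfl | rfl <;> simp [ha]

theorem kappa_add_log_le_normCocycle {g : SL2} {u : Plane} {v : Metric.sphere (0 : Plane) 1}
    {δ : ℝ} (hδ : 0 < δ) (hgu : opNorm g * |⟪u, (v : Plane)⟫| ≤ ‖g • (v : Plane)‖)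
    (hv : δ ≤ |⟪u, (v : Plane)⟫|) : kappa g + Real.log δ ≤ normCocycle g v := by
  have hg := opNorm_pos g
  rw [kappa, normCocycle, ← Real.log_mul hg.ne' hδ.ne']
  exact Real.log_le_log (by positivity) ((by gcongr : opNorm g * δ ≤ _).trans hgu)

theorem exists_forall_measureReal_abs_inner_coe_sphere_lt_le (hν : ∀ v, ν {v} = 0) {η : ℝ}
    (hη : 0 < η) : ∃ δ > 0, ∀ u : Plane, ‖u‖ = 1 →
      ν.real {v | |⟪u, (v : Plane)⟫| < δ} ≤ η := by
  have hcoe : Measurable (Subtype.val : Metric.sphere (0 : Plane) 1 → Plane) :=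
    measurable_subtype_coe
  have hnull (u : Plane) (hu : ‖u‖ = 1) : ν.map Subtype.val {v | ⟪u, v⟫ = 0} = 0 := by
    rw [Measure.map_apply hcoe (measurableSet_eq_fun (by fun_prop) (by fun_prop))]
    exact (measure_null_iff_singleton (finite_setOf_inner_coe_sphere_eq_zero hu).countable).2
      fun v _ => hν v
  obtain ⟨δ, hδ, hsmall⟩ := exists_forall_measureReal_abs_inner_lt_le _ hnull hη
  refine ⟨δ, hδ, fun u hu => ?_⟩
  have hmeas : MeasurableSet {v : Plane | |⟪u, v⟫| < δ} :=
    (isOpen_lt (by fun_prop) continuous_const).measurableSet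
  exact (map_measureReal_apply hcoe hmeas).symm.trans_le (hsmall u hu)

theorem exists_forall_half_kappa_sub_le_integral (hν : ∀ v, ν {v} = 0) :
    ∃ C, ∀ g : SL2, kappa g / 2 - C ≤ ∫ v, normCocycle g v ∂ν := by
  obtain ⟨δ, hδ, hsmall⟩ :=
    exists_forall_measureReal_abs_inner_coe_sphere_lt_le hν (η := 1 / 4) (by norm_num)
  refine ⟨|Real.log δ|, fun g => ?_⟩
  obtain ⟨u, hu, hgu⟩ := exists_forall_norm_mul_abs_inner_le
    (Matrix.toEuclideanCLM (𝕜 := ℝ) (n := Fin 2) g.1)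
  let A := {v : Metric.sphere (0 : Plane) 1 | |⟪u, (v : Plane)⟫| < δ}
  have hA : MeasurableSet A := (isOpen_lt (by fun_prop) continuous_const).measurableSet
  have hνA : ν.real A ≤ 1 / 4 := hsmall u hu
  have hbad : Integrable (A.indicator fun _ => 2 * kappa g) ν := (integrable_const _).indicator hA
  have lower_bound (v : Metric.sphere (0 : Plane) 1) :
      kappa g - |Real.log δ| - A.indicator (fun _ => 2 * kappa g) v ≤ normCocycle g v := by
    by_cases hv : v ∈ A
    · rw [Set.indicator_of_mem hv]
      linarith [neg_le_of_abs_le (abs_normCocycle_le_kappa g v), abs_nonneg (Real.log δ)]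
    · rw [Set.indicator_of_notMem hv, sub_zero]
      linarith [kappa_add_log_le_normCocycle hδ (hgu v) (not_lt.1 hv), neg_abs_le (Real.log δ)]
  calc kappa g / 2 - |Real.log δ|
      ≤ kappa g - |Real.log δ| - ν.real A * (2 * kappa g) := by
        linarith [mul_le_mul_of_nonneg_right hνA (kappa_nonneg g)]
    _ = ∫ v, (kappa g - |Real.log δ| - A.indicator (fun _ => 2 * kappa g) v) ∂ν := by
      rw [integral_sub (integrable_const _) hbad, integral_indicator hA]
      simp
    _ ≤ ∫ v, normCocycle g v ∂ν := integral_mono ((integrable_const _).sub hbad)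
      (.of_bound (continuous_normCocycle.comp (.prodMk_right g)).aestronglyMeasurable (kappa g)
        (Eventually.of_forall (abs_normCocycle_le_kappa g))) lower_bound

section Drift

variable {μ : Measure SL2} [IsProbabilityMeasure μ]

theorem integrable_normCocycle {ρ : Measure SL2} (hρ : Integrable kappa ρ)
    (v : Metric.sphere (0 : Plane) 1) : Integrable (normCocycle · v) ρ :=
  hρ.mono' (continuous_normCocycle.comp (.prodMk_left v)).aestronglyMeasurable
    (Eventually.of_forall fun g => abs_normCocycle_le_kappa g v)

theorem continuous_integral_normCocycle {ρ : Measure SL2} (hρ : Integrable kappa ρ) :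
    Continuous fun v : Metric.sphere (0 : Plane) 1 => ∫ g, normCocycle g v ∂ρ :=
  continuous_of_dominated (fun v => (integrable_normCocycle hρ v).aestronglyMeasurable)
    (fun v => Eventually.of_forall fun g => abs_normCocycle_le_kappa g v) hρ
    (Eventually.of_forall fun g => continuous_normCocycle.comp (.prodMk_right g))

theorem IsStationaryMeasure.exists_forall_integral_kappa_le
    (hκ : ∀ n, Integrable kappa (convPow μ n)) (hν : IsStationaryMeasure μ ν)
    (hatom : ∀ v, ν {v} = 0) (hdrift : ∫ v, ∫ g, normCocycle g v ∂μ ∂ν ≤ 0) :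
    ∃ C, ∀ n, ∫ g, kappa g ∂convPow μ n ≤ C := by
  obtain ⟨C, hC⟩ := exists_forall_half_kappa_sub_le_integral hatom
  refine ⟨2 * C, fun n => ?_⟩
  have hκμ : Integrable kappa μ := by simpa only [convPow_one] using hκ 1
  have hprod : Integrable (fun p => normCocycle p.1 p.2) ((convPow μ n).prod ν) :=
    ((hκ n).comp_fst ν).mono' continuous_normCocycle.aestronglyMeasurable
      (Eventually.of_forall fun p => abs_normCocycle_le_kappa p.1 p.2)
  have hhalf : Integrable (fun g => kappa g / 2 - C) (convPow μ n) :=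
    ((hκ n).div_const 2).sub (integrable_const C)
  have h : (∫ g, kappa g ∂convPow μ n) / 2 - C ≤ 0 :=
    calc (∫ g, kappa g ∂convPow μ n) / 2 - C
        = ∫ g, (kappa g / 2 - C) ∂convPow μ n := by
          rw [integral_sub ((hκ n).div_const 2) (integrable_const C), integral_div]
          simp
      _ ≤ ∫ g, ∫ v, normCocycle g v ∂ν ∂convPow μ n :=
          integral_mono hhalf hprod.integral_prod_left hC
      _ = ∫ v, ∫ g, normCocycle g v ∂convPow μ n ∂ν := integral_integral_swap hprod
      _ = n * ∫ v, ∫ g, normCocycle g v ∂μ ∂ν :=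
          hν.integral_integral_cocycle isAddCocycle_normCocycle
            (fun n => integrable_normCocycle (hκ n)) (continuous_integral_normCocycle hκμ) n
      _ ≤ 0 := mul_nonpos_of_nonneg_of_nonpos n.cast_nonneg hdrift
  linarith

theorem exp_neg_two_mul_integral_kappa_le {ρ : Measure SL2} [IsProbabilityMeasure ρ]
    (hρ : Integrable kappa ρ) :
    Real.exp (-2 * ∫ g, kappa g ∂ρ) ≤ ∫ g, (opNorm g ^ 2)⁻¹ ∂ρ := by
  have exp_kappa (g : SL2) : Real.exp (-2 * kappa g) = (opNorm g ^ 2)⁻¹ := by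
    rw [neg_mul, Real.exp_neg, two_mul, Real.exp_add, kappa,
      Real.exp_log (opNorm_pos g), sq]
  have hint : Integrable (fun g => (opNorm g ^ 2)⁻¹) ρ := by
    refine .of_bound (Measurable.aestronglyMeasurable
      (continuous_opNorm.measurable.pow_const 2).inv) 1 (Eventually.of_forall fun g => ?_)
    rw [Real.norm_of_nonneg (by positivity)]
    exact inv_le_one_of_one_le₀ (one_le_pow₀ (one_le_opNorm g))
  simp only [← exp_kappa] at hint ⊢
  rw [← integral_const_mul]
  exact convexOn_exp.map_integral_le Real.continuous_exp.continuousOn isClosed_univ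
    (Eventually.of_forall fun _ => trivial) (hρ.const_mul _) hint

theorem exists_forall_one_le_integral_normCocycle (hzd : ZariskiDense μ)
    (hκ : ∀ n, Integrable kappa (convPow μ n)) :
    ∃ N, ∀ v : Metric.sphere (0 : Plane) 1, 1 ≤ ∫ g, normCocycle g v ∂convPow μ N := by
  by_contra! h
  have hκμ : Integrable kappa μ := by simpa only [convPow_one] using hκ 1
  have hφ := continuous_integral_normCocycle hκμ
  simp only [← sum_walkMean_eq_integral_cocycle isAddCocycle_normCocycle
    (fun n => integrable_normCocycle (hκ n)) hφ] at h
  obtain ⟨ν, _, hν, hdrift⟩ := exists_isStationaryMeasure_integral_nonpos μ hφ h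
  obtain ⟨C, hC⟩ :=
    hν.exists_forall_integral_kappa_le hκ (hν.measure_singleton_eq_zero hzd) hdrift
  obtain ⟨n, hn⟩ := exists_integral_inv_sq_opNorm_lt μ hzd (Real.exp_pos (-2 * C))
  refine hn.not_ge (le_trans ?_ (exp_neg_two_mul_integral_kappa_le (hκ n)))
  gcongr Real.exp ?_
  linarith [hC n]

end Drift

end SphereMeasures

theorem renewal_operator_uniform_bound
    (μ : Measure SL2) [IsProbabilityMeasure μ]
    (hmom : HasExpMoment μ) (hzd : ZariskiDense μ) :
    ∃ C > (0 : ℝ), ∀ (s t : ℝ) (x : PX),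
      (∑' n : ℕ, μpi μ n {g | cocycle (word g) x - t ∈ Set.Icc 0 s}) ≤
        ENNReal.ofReal (C * max 1 s) := by
  obtain ⟨δ, hδ, hexp⟩ := exists_integrable_exp_mul_kappa hmom
  have hcocycle (v : Metric.sphere (0 : Plane) 1) : Measurable (normCocycle · v : SL2 → ℝ) :=
    (continuous_normCocycle.comp (.prodMk_left v)).measurable
  have hκ (n : ℕ) : Integrable kappa (convPow μ n) :=
    integrable_of_abs_le_of_integrable_exp hδ (hexp n) continuous_kappa.aestronglyMeasurable
      fun g => (abs_of_nonneg (kappa_nonneg g)).le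
  obtain ⟨N, hN⟩ := exists_forall_one_le_integral_normCocycle hzd hκ
  obtain ⟨ε, hε, a, ha, hcontr⟩ :=
    exists_lintegral_exp_neg_mul_le_of_drift hδ (hexp N) zero_lt_one
  obtain ⟨C, hC, hbound⟩ := exists_renewal_bound_of_contraction isAddCocycle_normCocycle
    hcocycle hε.le ha fun v => hcontr _ (hcocycle v).aestronglyMeasurable
      (fun g => abs_normCocycle_le_kappa g v) (hN v)
  refine ⟨C, hC, fun s t x => ?_⟩
  obtain ⟨v, hv⟩ := exists_cocycle_eq_normCocycle x
  have hmeas : MeasurableSet {g | normCocycle g v - t ∈ Set.Icc 0 s} :=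
    (hcocycle v).sub_const t measurableSet_Icc
  convert hbound s t v using 3 with n
  rw [← (measurePreserving_prod_ofFn μ n).measure_preimage hmeas.nullMeasurableSet]
  simp only [hv]
  rfl

end
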